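/- arXiv:2510.16277 — 4 statements merged into one kernel-verified Lean document; each statement's English description precedes it below -/
import Mathlib

section
/- Let q be a real number with q > 1 and let m ≥ 1 be an integer. Then the sum, over all integer partitions λ of 2m in which every odd part occurs with even multiplicity, of (1 - q^{-λ'_1}) / ( q^{( Σ_i (λ'_i)^2 + o(λ) )/2} · Π_i (1/q^2; 1/q^2)_{⌊m_i(λ)/2⌋} ) equals (1/(q^m (q+1))) · Σ_{i=1}^{m} (-1)^{i-1} (q^{2i+1} + 1) / ( q^{i(i+1)} (1/q^2; 1/q^2)_{m-i} ). -/
/-- The q-Pochhammer symbol `(a; Q)_n = ∏_{j=0}^{n-1} (1 - a Q^j)` over the reals. -/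
noncomputable def qPoch (a Q : ℝ) (n : ℕ) : ℝ := ∏ j ∈ Finset.range n, (1 - a * Q ^ j)

/-- `λ'_i`, the size of the `i`-th column of the Young diagram of `λ`, i.e. the number of
parts of `λ` of size at least `i` (equivalently `∑_{j ≥ i} m_j(λ)`). -/
def colLen {n : ℕ} (lam : Nat.Partition n) (i : ℕ) : ℕ :=
  (lam.parts.filter (fun j => i ≤ j)).card

/-- `o(λ)`, the number of odd parts of `λ`. -/
def numOddParts {n : ℕ} (lam : Nat.Partition n) : ℕ :=
  (lam.parts.filter (fun j => Odd j)).card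

namespace Anz
open Finset

/-- Pochhammer over a field -/
def PP {K : Type*} [Field K] (a x : K) (n : ℕ) : K := ∏ j ∈ range n, (1 - a * x ^ j)

section fieldid
variable {K : Type*} [Field K]

lemma PP_zero (a x : K) : PP a x 0 = 1 := by simp [PP]
lemma PP_succ (a x : K) (n : ℕ) : PP a x (n+1) = PP a x n * (1 - a * x^n) := by
  simp [PP, prod_range_succ]
lemma PP_succ' (a x : K) (n : ℕ) : PP a x (n+1) = (1 - a) * PP (a*x) x n := by
  simp only [PP, prod_range_succ', pow_zero, mul_one]
  rw [mul_comm]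
  congr 1
  apply prod_congr rfl
  intros; ring
lemma PP_ne (a x : K) (h : ∀ j, 1 - a * x^j ≠ 0) (n : ℕ) : PP a x n ≠ 0 :=
  prod_ne_zero_iff.2 fun j _ => h j

lemma pascal (x : K) (hx : ∀ j, 1 - x * x^j ≠ 0) (c : ℕ → K) (n : ℕ) :
    (1 - x * x^n) * ∑ j ∈ range (n+2), c j / (PP x x j * PP x x (n+1-j)) =
    ∑ j ∈ range (n+1), c j / (PP x x j * PP x x (n-j))
     + ∑ j ∈ range (n+1), x^(n-j) * c (j+1) / (PP x x j * PP x x (n-j)) := by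
  have hP := PP_ne x x hx
  have h1 : (1 - x * x^n) * ∑ j ∈ range (n+2), c j / (PP x x j * PP x x (n+1-j)) =
    ∑ j ∈ range (n+2), (1 - x^(n+1-j)) * c j / (PP x x j * PP x x (n+1-j)) +
    ∑ j ∈ range (n+2), x^(n+1-j) * (1 - x^j) * c j / (PP x x j * PP x x (n+1-j)) := by
    rw [mul_sum, ← sum_add_distrib]
    apply sum_congr rfl
    intro j hj
    obtain ⟨l, hl⟩ : ∃ l, n + 1 = j + l := ⟨n+1-j, by simp at hj; omega⟩
    have : n + 1 - j = l := by omega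
    rw [this]
    have : x * x^n = x^j * x^l := by rw [← pow_succ', hl, pow_add]
    rw [this]; ring
  rw [h1, sum_range_succ _ (n+1), sum_range_succ' _ (n+1)]
  simp only [Nat.sub_self, pow_zero, sub_self, zero_mul, mul_zero, zero_div, add_zero]
  congr 1
  · apply sum_congr rfl
    intro j hj
    have : n + 1 - j = (n - j) + 1 := by simp at hj; omega
    rw [this, PP_succ x x (n-j), pow_succ']
    have := hP j
    have := hP (n-j)
    have := hx (n-j)
    field_simp
  · apply sum_congr rfl
    intro j hj
    have : n + 1 - (j+1) = (n - j) := by simp at hj; omega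
    rw [this, PP_succ x x j, pow_succ' x j]
    have := hP j
    have := hP (n-j)
    have := hx j
    field_simp

lemma qbinom (x : K) (hx : ∀ j, 1 - x * x^j ≠ 0) (z : K) (n : ℕ) :
    ∑ j ∈ range (n+1), ((-1)^j * z^j * x^(j.choose 2)) / (PP x x j * PP x x (n-j))
      = PP z x n / PP x x n := by
  have hP := PP_ne x x hx
  induction n with
  | zero => simp [PP_zero]
  | succ n ih =>
    apply mul_left_cancel₀ (hx n)
    rw [pascal x hx (fun j => (-1)^j * z^j * x^(j.choose 2)) n]
    have : ∑ j ∈ range (n+1), x^(n-j) * ((-1)^(j+1) * z^(j+1) * x^((j+1).choose 2)) / (PP x x j * PP x x (n-j))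
       = (-z * x^n) * ∑ j ∈ range (n+1), ((-1)^j * z^j * x^(j.choose 2)) / (PP x x j * PP x x (n-j)) := by
      rw [mul_sum]
      apply sum_congr rfl
      intro j hj
      have e : x^n = x^(n-j) * x^j := by rw [← pow_add]; congr 1; simp at hj; omega
      rw [Nat.choose_succ_succ' j 1, Nat.choose_one_right, e, pow_add x j]
      ring
    rw [this, ih, PP_succ, PP_succ]
    have h1 := hP n
    have h2 := hx n
    generalize 1 - x * x^n = y at h2 ⊢
    field_simp
    ring

lemma vander (x : K) (hx : ∀ j, 1 - x * x^j ≠ 0) (n : ℕ) : ∀ (U : K) (_ : ∀ j, 1 - U * x^j ≠ 0),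
    ∑ j ∈ range (n+1), (U^j * x^(j*(j-1)) / PP U x j) / (PP x x j * PP x x (n-j))
      = 1 / (PP U x n * PP x x n) := by
  have hP := PP_ne x x hx
  induction n with
  | zero => intro U hU; simp [PP_zero]
  | succ n ih =>
    intro U hU
    have hU' : ∀ j, 1 - (U*x) * x^j ≠ 0 := fun j => by
      have := hU (j+1); rwa [pow_succ', ← mul_assoc] at this
    apply mul_left_cancel₀ (hx n)
    rw [pascal x hx (fun j => U^j * x^(j*(j-1)) / PP U x j) n]
    have hU0 : 1 - U ≠ 0 := by simpa using hU 0
    have : ∑ j ∈ range (n+1), x^(n-j) * (U^(j+1) * x^((j+1)*(j+1-1)) / PP U x (j+1)) / (PP x x j * PP x x (n-j))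
       = (U * x^n / (1 - U)) * ∑ j ∈ range (n+1), ((U*x)^j * x^(j*(j-1)) / PP (U*x) x j) / (PP x x j * PP x x (n-j)) := by
      rw [mul_sum]
      apply sum_congr rfl
      intro j hj
      have e : x^n = x^(n-j) * x^j := by rw [← pow_add]; congr 1; simp at hj; omega
      have e2 : x^((j+1)*(j+1-1)) = x^j * x^j * x^(j*(j-1)) := by
        rw [← pow_add, ← pow_add]; congr 1
        cases j with
        | zero => simp
        | succ j => simp; ring
      rw [e, e2, PP_succ']
      have := hP j
      have := hP (n-j)
      have := PP_ne (U*x) x hU' j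
      field_simp
      ring
    rw [this, ih U hU, ih (U*x) hU']
    have h3 : (1-U) * PP (U*x) x n = PP U x n * (1 - U * x^n) := by
      rw [← PP_succ', PP_succ]
    have h4 : U * x^n / (1-U) * (1 / (PP (U*x) x n * PP x x n)) = U * x^n / (PP U x n * (1 - U * x^n) * PP x x n) := by
      rw [← h3]
      have := hP n
      have := PP_ne (U*x) x hU' n
      field_simp
    rw [h4, PP_succ, PP_succ]
    have h5 := hP n
    have h6 := hx n
    have h7 := PP_ne U x hU n
    have h8 := hU n
    generalize 1 - x * x^n = y at h6 ⊢
    field_simp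
    ring

lemma choose_id (s i : ℕ) (h : i ≤ s) : i^2 + i + (i+1)*(s-i) + (s-i).choose 2 = (s+1).choose 2 + i + i.choose 2 := by
  obtain ⟨j, rfl⟩ := Nat.exists_eq_add_of_le h
  have := Nat.add_choose_eq
  have e : i + j - i = j := by omega
  rw [e]
  have h1 : ∀ a : ℕ, (a.choose 2) * 2 = a * (a-1) := fun a => by
    rw [Nat.choose_two_right]; exact Nat.div_mul_cancel (Nat.even_mul_pred_self a).two_dvd
  have a1 := h1 j
  have a2 := h1 i
  have a3 := h1 (i+j+1)
  simp at a3
  rcases i with _ | i <;> rcases j with _ | j <;> simp at * <;> nlinarith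

lemma final_id (x q : K) (hx : ∀ j, 1 - x * x^j ≠ 0) (M : ℕ) (hq : q + 1 ≠ 0) (hqx : q^2 * x = 1) :
    ∑ i ∈ range (M+1), x^(i^2+i) / PP x x i * (PP (x^(i+1)) x (M-i) / PP x x (M-i)) * (1 - (q-1) * x^(i+1))
    = 1 / (q+1) * ∑ s ∈ range (M+1), (-1)^s * x^((s+1).choose 2) * (q + x^(s+1)) / PP x x (M-s) := by
  have hP := PP_ne x x hx
  have h1 : ∀ i ∈ range (M+1), x^(i^2+i) / PP x x i * (PP (x^(i+1)) x (M-i) / PP x x (M-i)) * (1 - (q-1) * x^(i+1))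
     = ∑ j ∈ range (M+1-i), x^(i^2+i) / PP x x i * (((-1)^j * (x^(i+1))^j * x^(j.choose 2)) / (PP x x j * PP x x (M-(i+j)))) * (1 - (q-1) * x^(i+1)) := by
    intro i hi
    rw [← qbinom x hx, mul_sum, sum_mul]
    have : M + 1 - i = M - i + 1 := by simp at hi; omega
    rw [this]
    apply sum_congr rfl
    intro j _
    rw [Nat.sub_sub]
  rw [sum_congr rfl h1]
  rw [← sum_range_diag_flip (M+1) (fun i j => x^(i^2+i) / PP x x i * (((-1)^j * (x^(i+1))^j * x^(j.choose 2)) / (PP x x j * PP x x (M-(i+j)))) * (1 - (q-1) * x^(i+1)))]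
  rw [mul_sum]
  apply sum_congr rfl
  intro s hs
  have h2 : ∀ i ∈ range (s+1), x^(i^2+i) / PP x x i * (((-1)^(s-i) * (x^(i+1))^(s-i) * x^((s-i).choose 2)) / (PP x x (s-i) * PP x x (M-(i+(s-i))))) * (1 - (q-1) * x^(i+1))
     = (-1)^s * x^((s+1).choose 2) / PP x x (M-s) * (((-1)^i * x^i * x^(i.choose 2)) / (PP x x i * PP x x (s-i)) - (q-1) * x * (((-1)^i * (x^2)^i * x^(i.choose 2)) / (PP x x i * PP x x (s-i)))) := by
    intro i hi
    have hi' : i ≤ s := by simp at hi; omega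
    have e1 : i + (s - i) = s := by omega
    have e2 : x^(i^2+i) * (x^(i+1))^(s-i) * x^((s-i).choose 2) = x^((s+1).choose 2) * x^i * x^(i.choose 2) := by
      rw [← pow_mul, ← pow_add, ← pow_add, ← pow_add, ← pow_add, choose_id s i hi']
    have e3 : (-1 : K)^(s-i) = (-1)^s * (-1)^i := by
      obtain ⟨j, rfl⟩ := Nat.exists_eq_add_of_le hi'
      rw [Nat.add_sub_cancel_left, pow_add, mul_right_comm, ← mul_pow]; simp
    rw [e1, e3]
    have := hP i
    have := hP (s-i)
    have := hP (M-s)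
    trans (-1)^s * (-1)^i * (x^(i^2+i) * (x^(i+1))^(s-i) * x^((s-i).choose 2)) * (1 - (q-1) * x^(i+1)) / (PP x x i * PP x x (s-i) * PP x x (M-s))
    · field_simp
    · rw [e2]
      field_simp
      ring
  rw [sum_congr rfl h2, ← mul_sum, sum_sub_distrib, ← mul_sum, qbinom x hx, qbinom x hx]
  have h3 : PP (x^2) x s * (1 - x) = PP x x s * (1 - x * x^s) := by
    rw [← PP_succ, PP_succ', sq, mul_comm]
  have h0 : 1 - x ≠ 0 := by simpa using hx 0
  have h4 : PP (x^2) x s = PP x x s * (1 - x * x^s) / (1 - x) := by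
    rw [← h3]; field_simp
  rw [h4]
  have := hP s
  have := hP (M-s)
  have h5 : 1 - (q-1)*x * ((1 - x * x^s) / (1-x)) = (q + x^(s+1)) / (q+1) := by
    field_simp
    rw [pow_succ]
    linear_combination (x^s * x - 1) * hqx
  have h6 : PP x x s / PP x x s - (q - 1) * x * (PP x x s * (1 - x * x ^ s) / (1 - x) / PP x x s) = 1 - (q-1)*x * ((1 - x * x^s) / (1-x)) := by
    field_simp
  rw [h6, h5]
  field_simp

end fieldid
section closed
variable {K : Type*} [Field K]

lemma sum_range_even (a : ℕ → K) (n : ℕ) : ∑ j ∈ range (2*n+1), a j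
    = ∑ j ∈ range (n+1), a (2*j) + ∑ j ∈ range n, a (2*j+1) := by
  induction n with
  | zero => simp
  | succ n ih =>
    rw [show 2*(n+1)+1 = 2*n+1+1+1 by ring, sum_range_succ, sum_range_succ, ih,
      sum_range_succ _ (n+1), sum_range_succ _ n, sum_range_succ _ n, show 2*(n+1) = 2*n+1+1 by ring]
    ring

lemma sum_range_odd (a : ℕ → K) (n : ℕ) : ∑ j ∈ range (2*n+1+1), a j
    = ∑ j ∈ range (n+1), a (2*j) + ∑ j ∈ range (n+1), a (2*j+1) := by
  rw [sum_range_succ, sum_range_even, sum_range_succ _ n]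
  rw [sum_range_succ _ n]
  ring

/-- closed form of the symplectic sums -/
def Fc (U x : K) (k : ℕ) : K :=
  if Even k then U^(k/2) * x^((k/2)^2) / (PP x x (k/2) * PP U x (k/2))
  else U^(k/2+1) * x^((k/2)^2+k/2) / (PP x x (k/2) * PP U x (k/2+1))

/-- closed form of the orthogonal sums -/
def Gc (u U x : K) (k : ℕ) : K :=
  if Even k then U^(k/2) * x^((k/2)*(k/2-1)) / (PP x x (k/2) * PP U x (k/2))
  else u * U^(k/2) * x^((k/2)^2) / (PP x x (k/2) * PP U x (k/2+1))

lemma odd_half (n : ℕ) : (2*n+1)/2 = n := by omega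

lemma Fc_even (U x : K) (n : ℕ) : Fc U x (2*n) = U^n * x^(n^2) / (PP x x n * PP U x n) := by
  simp [Fc]
lemma Fc_odd (U x : K) (n : ℕ) : Fc U x (2*n+1) = U^(n+1) * x^(n^2+n) / (PP x x n * PP U x (n+1)) := by
  simp [Fc, odd_half]
lemma Gc_even (u U x : K) (n : ℕ) : Gc u U x (2*n) = U^n * x^(n*(n-1)) / (PP x x n * PP U x n) := by
  simp [Gc]
lemma Gc_odd (u U x : K) (n : ℕ) : Gc u U x (2*n+1) = u * U^n * x^(n^2) / (PP x x n * PP U x (n+1)) := by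
  simp [Gc, odd_half]

lemma Fc_rec (u t U x : K) (hxt : x = t^4) (hUt : U = u^2 * t^2)
    (hx : ∀ j, 1 - x * x^j ≠ 0) (hU : ∀ j, 1 - U * x^j ≠ 0) (k : ℕ) :
    Fc U x k = u^k * t^(k*(k+1)) *
      ∑ j ∈ range (k+1), if Even (k-j) then Gc u U x j / PP x x ((k-j)/2) else 0 := by
  have hP := PP_ne x x hx
  have hPU := PP_ne U x hU
  have hU' : ∀ j, 1 - (U*x) * x^j ≠ 0 := fun j => by
    have := hU (j+1); rwa [pow_succ', ← mul_assoc] at this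
  have hU0 : 1 - U ≠ 0 := by simpa using hU 0
  rcases Nat.even_or_odd' k with ⟨n, rfl | rfl⟩
  · rw [sum_range_even]
    have h0 : ∑ j ∈ range n, (if Even (2*n-(2*j+1)) then Gc u U x (2*j+1) / PP x x ((2*n-(2*j+1))/2) else 0) = 0 := by
      apply sum_eq_zero
      intro j hj
      rw [if_neg]
      simp at hj
      rw [Nat.not_even_iff]; omega
    have h1 : ∑ j ∈ range (n+1), (if Even (2*n-(2*j)) then Gc u U x (2*j) / PP x x ((2*n-(2*j))/2) else 0) =
        1 / (PP U x n * PP x x n) := by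
      rw [← vander x hx n U hU]
      apply sum_congr rfl
      intro j hj
      rw [if_pos (by rw [Nat.even_iff]; omega), Gc_even, show (2*n-(2*j))/2 = n-j by omega]
      have := hP j
      have := hP (n-j)
      have := hPU j
      field_simp
    rw [h0, h1, Fc_even, hUt, hxt]
    have e : (u^2*t^2)^n * (t^4)^n^2 = u^(2*n) * t^(2*n*(2*n+1)) := by ring
    rw [e]; ring
  · rw [sum_range_odd]
    have h0 : ∑ j ∈ range (n+1), (if Even (2*n+1-(2*j)) then Gc u U x (2*j) / PP x x ((2*n+1-(2*j))/2) else 0) = 0 := by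
      apply sum_eq_zero
      intro j hj
      rw [if_neg]
      simp at hj
      rw [Nat.not_even_iff]; omega
    have h1 : ∑ j ∈ range (n+1), (if Even (2*n+1-(2*j+1)) then Gc u U x (2*j+1) / PP x x ((2*n+1-(2*j+1))/2) else 0) =
        u / (1-U) * (1 / (PP (U*x) x n * PP x x n)) := by
      rw [← vander x hx n (U*x) hU', mul_sum]
      apply sum_congr rfl
      intro j hj
      rw [if_pos (by rw [Nat.even_iff]; omega), Gc_odd, show (2*n+1-(2*j+1))/2 = n-j by omega, PP_succ']
      have := hP j
      have := hP (n-j)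
      have := PP_ne (U*x) x hU' j
      have e : x^(j^2) = x^j * x^(j*(j-1)) := by
        rw [← pow_add]; congr 1
        cases j <;> simp; ring
      rw [e]
      field_simp
      ring
    rw [h0, h1, Fc_odd, PP_succ']
    have e : U^(n+1) * x^(n^2+n) = u^(2*n+1) * t^((2*n+1)*(2*n+1+1)) * u := by
      rw [hUt, hxt]; ring
    rw [e]
    have := hP n
    have := PP_ne (U*x) x hU' n
    field_simp
    ring

lemma Gc_rec (u t U x : K) (hxt : x = t^4) (hUt : U = u^2 * t^2)
    (hx : ∀ j, 1 - x * x^j ≠ 0) (hU : ∀ j, 1 - U * x^j ≠ 0) (k : ℕ) :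
    Gc u U x k = u^k * t^(k*(k-1)) *
      ∑ j ∈ range (k+1), Fc U x j / PP x x ((k-j)/2) := by
  have hP := PP_ne x x hx
  have hPU := PP_ne U x hU
  have hU' : ∀ j, 1 - (U*x) * x^j ≠ 0 := fun j => by
    have := hU (j+1); rwa [pow_succ', ← mul_assoc] at this
  have hU0 : 1 - U ≠ 0 := by simpa using hU 0
  rcases Nat.even_or_odd' k with ⟨n, rfl | rfl⟩
  · rw [sum_range_even]
    have h1 : ∑ j ∈ range (n+1), Fc U x (2*j) / PP x x ((2*n-(2*j))/2) + 
        ∑ j ∈ range n, Fc U x (2*j+1) / PP x x ((2*n-(2*j+1))/2) =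
        1 / (PP U x n * PP x x n) := by
      rw [← vander x hx n U hU, sum_range_succ', sum_range_succ' _ n, add_right_comm, ← sum_add_distrib]
      congr 1
      · apply sum_congr rfl
        intro j hj
        simp at hj
        rw [Fc_even, Fc_odd, show (2*n-(2*(j+1)))/2 = n-(j+1) by omega, show (2*n-(2*j+1))/2 = n-(j+1) by omega]
        have h1 := hP j
        have h2 := hP (n-(j+1))
        have h3 := hPU (j+1)
        have h4 := hx j
        rw [PP_succ x x j, show (j+1)^2 = (j^2+j) + (j+1) by ring, show (j+1)*(j+1-1) = j^2+j by simp; ring, pow_add x (j^2+j) (j+1), pow_succ' x j]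
        generalize x^(j^2+j) = z
        generalize x * x^j = y at h4 ⊢
        field_simp
        ring
      · simp [Fc, PP_zero]
    rw [h1, Gc_even, hUt, hxt]
    have e : (u^2*t^2)^n * (t^4)^(n*(n-1)) = u^(2*n) * t^(2*n*(2*n-1)) := by 
      cases n with
      | zero => simp
      | succ n => 
        rw [show 2 * (n+1) - 1 = 2*n+1 by omega, show n + 1 - 1 = n by omega]
        ring
    rw [e]; ring
  · rw [sum_range_odd]
    have h1 : ∑ j ∈ range (n+1), Fc U x (2*j) / PP x x ((2*n+1-(2*j))/2) + 
        ∑ j ∈ range (n+1), Fc U x (2*j+1) / PP x x ((2*n+1-(2*j+1))/2) =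
        1 / (1-U) * (1 / (PP (U*x) x n * PP x x n)) := by
      rw [← vander x hx n (U*x) hU', mul_sum, ← sum_add_distrib]
      apply sum_congr rfl
      intro j hj
      simp at hj
      rw [Fc_even, Fc_odd, show (2*n+1-(2*j))/2 = n-j by omega, show (2*n+1-(2*j+1))/2 = n-j by omega]
      have h1 := hP j
      have h2 := hP (n-j)
      have h3 := hPU j
      have h4 := hU j
      have h5 := PP_ne (U*x) x hU' j
      have e : x^(j^2) = x^j * x^(j*(j-1)) := by
        rw [← pow_add]; congr 1
        cases j <;> simp; ring
      have e2 : 1 / (1-U) * (((U * x) ^ j * x ^ (j * (j - 1)) / PP (U*x) x j) / (PP x x j * PP x x (n - j)))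
         = U^j * x^(j^2) / (PP U x (j+1) * (PP x x j * PP x x (n - j))) := by
        rw [PP_succ', e]
        field_simp
        ring
      rw [e2, PP_succ, pow_add x (j^2) j, pow_succ U j]
      generalize x^(j^2) = z
      generalize x^j = y at h4 ⊢
      generalize U^j = w
      field_simp
      ring
    rw [h1, Gc_odd, PP_succ']
    have e : u * U^n * x^(n^2) = u^(2*n+1) * t^((2*n+1)*(2*n+1-1)) := by
      rw [show 2 * n+1 - 1 = 2*n by omega, hUt, hxt]
      ring
    rw [e]
    have := hP n
    have := PP_ne (U*x) x hU' n
    field_simp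

lemma FG_unique (u t U x : K) (hxt : x = t^4) (hUt : U = u^2 * t^2)
    (hx : ∀ j, 1 - x * x^j ≠ 0) (hU : ∀ j, 1 - U * x^j ≠ 0)
    (hn : ∀ k, 1 ≤ k → 1 - u^k * t^(k*(k+1)) * (u^k * t^(k*(k-1))) ≠ 0)
    (F G : ℕ → K) (hF0 : F 0 = 1) (hG0 : G 0 = 1)
    (hF : ∀ k, 1 ≤ k → F k = u^k * t^(k*(k+1)) *
      ∑ j ∈ range (k+1), if Even (k-j) then G j / PP x x ((k-j)/2) else 0)
    (hG : ∀ k, 1 ≤ k → G k = u^k * t^(k*(k-1)) *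
      ∑ j ∈ range (k+1), F j / PP x x ((k-j)/2)) (k : ℕ) :
    F k = Fc U x k ∧ G k = Gc u U x k := by
  induction k using Nat.strong_induction_on with
  | _ k ih =>
    rcases Nat.eq_zero_or_pos k with rfl | hk
    · simp [hF0, hG0, Fc, Gc, PP_zero]
    · have a1 := hF k hk
      have a2 := hG k hk
      have a3 := Fc_rec u t U x hxt hUt hx hU k
      have a4 := Gc_rec u t U x hxt hUt hx hU k
      have a5 := hn k hk
      have s1 : ∑ j ∈ range k, (if Even (k-j) then G j / PP x x ((k-j)/2) else 0) = 
         ∑ j ∈ range k, (if Even (k-j) then Gc u U x j / PP x x ((k-j)/2) else 0) := by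
        apply sum_congr rfl
        intro j hj
        rw [(ih j (by simpa using hj)).2]
      have s2 : ∑ j ∈ range k, F j / PP x x ((k-j)/2) = 
         ∑ j ∈ range k, Fc U x j / PP x x ((k-j)/2) := by
        apply sum_congr rfl
        intro j hj
        rw [(ih j (by simpa using hj)).1]
      rw [sum_range_succ, s1] at a1
      rw [sum_range_succ, s2] at a2
      rw [sum_range_succ] at a3 a4
      simp only [Nat.sub_self, Even.zero, if_true, Nat.zero_div, PP_zero, div_one] at a1 a2 a3 a4
      generalize u^k * t^(k*(k+1)) = A at *
      generalize u^k * t^(k*(k-1)) = B at *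
      have : (1 - A * B) * (F k - Fc U x k) = 0 := by
        linear_combination a1 - a3 + A * (a2 - a4)
      have h1 : F k - Fc U x k = 0 := (mul_eq_zero.1 this).resolve_left a5
      refine ⟨sub_eq_zero.1 h1, ?_⟩
      linear_combination a2 - a4 + B * h1

end closed
section parts

/-- column length -/
def col (s : Multiset ℕ) (i : ℕ) : ℕ := (s.filter (fun j => i ≤ j)).card
/-- odd parts -/
def od (s : Multiset ℕ) : ℕ := (s.filter (fun j => Odd j)).card
/-- sum of squares of column lengths -/
def SQ (N : ℕ) (s : Multiset ℕ) : ℕ := ∑ i ∈ range N, col s (i+1) ^ 2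
/-- product of Pochhammer symbols -/
noncomputable def PR (x : ℝ) (N : ℕ) (s : Multiset ℕ) : ℝ := ∏ i ∈ range N, PP x x (s.count (i+1) / 2)

/-- adding a first column of length k -/
def Phi (k : ℕ) (s : Multiset ℕ) : Multiset ℕ := s.map Nat.succ + Multiset.replicate (k - s.card) 1

open Classical in
/-- symplectic weight -/
noncomputable def wC (t x : ℝ) (s : Multiset ℕ) : ℝ :=
  if ∀ i, Odd i → Even (s.count i) then t ^ (SQ s.sum s + od s) / PR x s.sum s else 0
open Classical in
/-- orthogonal weight -/
noncomputable def wO (t x : ℝ) (s : Multiset ℕ) : ℝ :=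
  if ∀ i, Even i → Even (s.count i) then t ^ (SQ s.sum s) * t⁻¹ ^ (od s) / PR x s.sum s else 0

lemma count_Phi_one (k : ℕ) (s : Multiset ℕ) (h0 : 0 ∉ s) : (Phi k s).count 1 = k - s.card := by
  simp [Phi, Multiset.count_replicate_self, h0]

lemma count_Phi_succ (k : ℕ) (s : Multiset ℕ) (i : ℕ) (hi : i ≠ 0) :
    (Phi k s).count (i+1) = s.count i := by
  have := Multiset.count_map_eq_count' Nat.succ s Nat.succ_injective i
  simp only [Nat.succ_eq_add_one] at this
  simp only [Phi, Multiset.count_add, Nat.succ_eq_add_one, this, Multiset.count_replicate]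
  simp
  omega

lemma count_Phi_zero (k : ℕ) (s : Multiset ℕ) :
    (Phi k s).count 0 = 0 := by
  simp [Phi, Multiset.mem_replicate]

lemma col_Phi_one (k : ℕ) (s : Multiset ℕ) (hk : s.card ≤ k) : col (Phi k s) 1 = k := by
  unfold col
  rw [Multiset.filter_eq_self.2]
  · simp [Phi]; omega
  · intro a ha
    simp [Phi, Multiset.mem_replicate] at ha
    omega

lemma col_Phi_succ (k : ℕ) (s : Multiset ℕ) (i : ℕ) (hi : i ≠ 0) : col (Phi k s) (i+1) = col s i := by
  unfold col Phi
  rw [Multiset.filter_add, Multiset.filter_map, Multiset.card_add, Multiset.card_map]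
  have : Multiset.filter (fun j => i + 1 ≤ j) (Multiset.replicate (k - s.card) 1) = 0 := by
    rw [Multiset.filter_eq_nil]
    intro a ha
    have := Multiset.eq_of_mem_replicate ha
    omega
  rw [this]
  simp

lemma od_Phi (k : ℕ) (s : Multiset ℕ) (hk : s.card ≤ k) : od (Phi k s) + od s = k := by
  unfold od Phi
  rw [Multiset.filter_add, Multiset.filter_map, Multiset.card_add, Multiset.card_map]
  have : Multiset.filter (fun j => Odd j) (Multiset.replicate (k - s.card) 1) = Multiset.replicate (k - s.card) 1 := by
    rw [Multiset.filter_eq_self]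
    intro a ha
    have := Multiset.eq_of_mem_replicate ha
    subst this; simp
  rw [this]
  have e : Multiset.filter ((fun j => Odd j) ∘ Nat.succ) s = Multiset.filter (fun j => ¬ Odd j) s := by
    apply Multiset.filter_congr
    intro a _
    simp [Nat.odd_add_one]
  have h2 := congrArg Multiset.card (Multiset.filter_add_not (fun j => Odd j) s)
  rw [Multiset.card_add] at h2
  rw [e]
  simp
  simp at h2
  omega

lemma SQ_Phi (k N : ℕ) (s : Multiset ℕ) (hk : s.card ≤ k) : SQ (N+1) (Phi k s) = SQ N s + k^2 := by
  unfold SQ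
  rw [sum_range_succ', zero_add, col_Phi_one k s hk]
  congr 1
  apply sum_congr rfl
  intro i _
  rw [col_Phi_succ _ _ _ (by omega)]

lemma PR_Phi (x : ℝ) (k N : ℕ) (s : Multiset ℕ) (h0 : 0 ∉ s) :
    PR x (N+1) (Phi k s) = PR x N s * PP x x ((k - s.card)/2) := by
  unfold PR
  rw [prod_range_succ', zero_add, count_Phi_one k s h0]
  congr 1
  apply prod_congr rfl
  intro i _
  rw [count_Phi_succ _ _ _ (by omega)]

lemma SQ_stable (N : ℕ) (s : Multiset ℕ) (hN : s.sum ≤ N) : SQ N s = SQ s.sum s := by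
  unfold SQ
  symm
  apply sum_subset (by simpa using hN)
  intro i _ hi
  simp at hi
  have : col s (i+1) = 0 := by
    unfold col
    rw [Multiset.card_eq_zero, Multiset.filter_eq_nil]
    intro a ha
    have := Multiset.le_sum_of_mem ha
    omega
  simp [this]

lemma PR_stable (x : ℝ) (N : ℕ) (s : Multiset ℕ) (hN : s.sum ≤ N) : PR x N s = PR x s.sum s := by
  unfold PR
  symm
  apply prod_subset (by simpa using hN)
  intro i _ hi
  simp at hi
  have : s.count (i+1) = 0 := by
    rw [Multiset.count_eq_zero]
    intro ha
    have := Multiset.le_sum_of_mem ha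
    omega
  simp [this, PP_zero]

lemma sum_Phi (k : ℕ) (s : Multiset ℕ) (hk : s.card ≤ k) : (Phi k s).sum = s.sum + k := by
  simp [Phi, Multiset.sum_map_add]
  omega

lemma TC_Phi (k : ℕ) (s : Multiset ℕ) (h0 : 0 ∉ s) :
    (∀ i, Odd i → Even ((Phi k s).count i)) ↔ Even (k - s.card) ∧ ∀ i, Even i → Even (s.count i) := by
  constructor
  · intro h
    refine ⟨by simpa [count_Phi_one k s h0] using h 1 (by simp), fun i hi => ?_⟩
    rcases eq_or_ne i 0 with rfl | h1
    · simp [h0]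
    · simpa [count_Phi_succ k s i h1] using h (i+1) hi.add_one
  · rintro ⟨h1, h⟩ i hi
    rcases i with _ | i
    · simp at hi
    rcases eq_or_ne i 0 with rfl | h2
    · simpa [count_Phi_one k s h0] using h1
    · rw [count_Phi_succ k s i h2]
      apply h
      simpa [Nat.odd_add_one] using hi

lemma TO_Phi (k : ℕ) (s : Multiset ℕ) :
    (∀ i, Even i → Even ((Phi k s).count i)) ↔ ∀ i, Odd i → Even (s.count i) := by
  constructor
  · intro h i hi
    rw [← count_Phi_succ k s i (by rintro rfl; simp at hi)]
    exact h (i+1) hi.add_one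
  · rintro h i hi
    rcases i with _ | i
    · simp [count_Phi_zero]
    rcases eq_or_ne i 0 with rfl | h2
    · simp at hi
    · rw [count_Phi_succ k s i h2]
      apply h
      simpa [Nat.even_add_one] using hi

lemma wC_Phi (t x : ℝ) (ht : t ≠ 0) (k : ℕ) (s : Multiset ℕ) (h0 : 0 ∉ s) (hk : s.card ≤ k) :
    wC t x (Phi k s) = t^(k*(k+1)) * (if Even (k - s.card) then wO t x s / PP x x ((k-s.card)/2) else 0) := by
  unfold wC wO
  by_cases h1 : Even (k - s.card)
  swap
  · rw [if_neg (fun h => h1 ((TC_Phi k s h0).1 h).1), if_neg h1, mul_zero]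
  by_cases h2 : ∀ i, Even i → Even (s.count i)
  swap
  · rw [if_neg (fun h => h2 ((TC_Phi k s h0).1 h).2), if_neg h2]; simp
  rw [if_pos ((TC_Phi k s h0).2 ⟨h1, h2⟩), if_pos h1, if_pos h2]
  rw [← SQ_stable (s.sum + k + 1) (Phi k s) (by rw [sum_Phi k s hk]; omega),
    ← PR_stable x (s.sum + k + 1) (Phi k s) (by rw [sum_Phi k s hk]; omega), SQ_Phi k _ s hk, PR_Phi x k _ s h0,
    SQ_stable _ s (by omega), PR_stable x _ s (by omega)]
  have e := od_Phi k s hk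
  have e2 : t^(od (Phi k s)) = t^k * t⁻¹^(od s) := by
    rw [inv_pow]
    field_simp
    rw [← pow_add, e]
  rw [pow_add, pow_add, e2]
  field_simp
  ring

lemma wO_Phi (t x : ℝ) (ht : t ≠ 0) (k : ℕ) (hk1 : 1 ≤ k) (s : Multiset ℕ) (h0 : 0 ∉ s) (hk : s.card ≤ k) :
    wO t x (Phi k s) = t^(k*(k-1)) * (wC t x s / PP x x ((k-s.card)/2)) := by
  unfold wC wO
  by_cases h2 : ∀ i, Odd i → Even (s.count i)
  swap
  · rw [if_neg (fun h => h2 ((TO_Phi k s).1 h)), if_neg h2]; simp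
  rw [if_pos ((TO_Phi k s).2 h2), if_pos h2]
  rw [← SQ_stable (s.sum + k + 1) (Phi k s) (by rw [sum_Phi k s hk]; omega),
    ← PR_stable x (s.sum + k + 1) (Phi k s) (by rw [sum_Phi k s hk]; omega), SQ_Phi k _ s hk, PR_Phi x k _ s h0,
    SQ_stable _ s (by omega), PR_stable x _ s (by omega)]
  have e := od_Phi k s hk
  have e2 : t^(k^2) * t⁻¹^(od (Phi k s)) = t^(k*(k-1)) * t^(od s) := by
    rw [inv_pow]
    field_simp
    rw [mul_assoc, ← pow_add, ← pow_add, show od (Phi k s) + (k * (k - 1) + od s) = k * (k-1) + k by omega]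
    congr 1
    cases k with
    | zero => omega
    | succ k => simp; ring
  rw [pow_add, pow_add, mul_assoc, e2]
  field_simp

lemma sum_shift (n k : ℕ) (h : Multiset ℕ → ℝ) :
    ∑ lam : Nat.Partition (n+k), (if lam.parts.card = k then h lam.parts else 0)
    = ∑ mu : Nat.Partition n, (if mu.parts.card ≤ k then h (Phi k mu.parts) else 0) := by
  rw [← sum_filter, ← sum_filter]
  symm
  refine sum_bij (fun mu hmu => (⟨Phi k mu.parts, ?_, ?_⟩ : Nat.Partition (n+k))) ?_ ?_ ?_ ?_
  · intro i hi
    simp [Phi, Multiset.mem_replicate] at hi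
    omega
  · rw [sum_Phi _ _ (by simpa using hmu), mu.parts_sum]
  · intro mu hmu
    simp at hmu
    simp [Phi]
    omega
  · intro a ha b hb hab
    simp only [Nat.Partition.mk.injEq] at hab
    ext1
    ext i
    rcases eq_or_ne i 0 with rfl | hi
    · rw [Multiset.count_eq_zero.2, Multiset.count_eq_zero.2]
      · intro h; exact absurd (b.parts_pos h) (by simp)
      · intro h; exact absurd (a.parts_pos h) (by simp)
    · rw [← count_Phi_succ k a.parts i hi, hab, count_Phi_succ k _ i hi]
  · intro lam hlam
    simp only [mem_filter, mem_univ, true_and] at hlam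
    have hpos : ∀ i ∈ lam.parts, 0 < i := fun i hi => lam.parts_pos hi
    have key : ∀ s : Multiset ℕ, (∀ i ∈ s, 0 < i) →
        Phi s.card ((s.map Nat.pred).filter (0 < ·)) = s ∧ ((s.map Nat.pred).filter (0 < ·)).sum + s.card = s.sum
         ∧ ((s.map Nat.pred).filter (0 < ·)).card ≤ s.card := by
      intro s
      induction s using Multiset.induction_on with
      | empty => simp [Phi]
      | cons a s ih =>
        intro hs
        obtain ⟨h1, h2, h3⟩ := ih (fun i hi => hs i (Multiset.mem_cons_of_mem hi))
        have ha := hs a (Multiset.mem_cons_self a s)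
        rcases a with _ | a
        · omega
        rcases a with _ | a
        · simp at h1 h2 h3 ⊢
          refine ⟨?_, by omega, by omega⟩
          conv_rhs => rw [← h1]
          unfold Phi
          rw [Nat.succ_sub h3, Multiset.replicate_succ]
          simp
        · simp at h1 h2 h3 ⊢
          refine ⟨?_, by omega, by omega⟩
          conv_rhs => rw [← h1]
          unfold Phi
          simp
    obtain ⟨h1, h2, h3⟩ := key lam.parts hpos
    refine ⟨⟨(lam.parts.map Nat.pred).filter (0 < ·), ?_, ?_⟩, ?_, ?_⟩
    · intro i hi
      exact (Multiset.mem_filter.1 hi).2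
    · have := lam.parts_sum
      omega
    · simp only [mem_filter, mem_univ, true_and]
      omega
    · ext1
      simpa [hlam] using h1
  · intro mu hmu
    rfl

/-- coefficient of the generating function -/
noncomputable def cf (w : Multiset ℕ → ℝ) (k n : ℕ) : ℝ :=
  ∑ lam : Nat.Partition n, (if lam.parts.card = k then w lam.parts else 0)

lemma card_le_part {n : ℕ} (lam : Nat.Partition n) : lam.parts.card ≤ n := by
  have := Multiset.card_nsmul_le_sum (s := lam.parts) (a := 1) (fun i hi => lam.parts_pos hi)
  rw [lam.parts_sum] at this
  simpa using this

lemma cf_lt (w : Multiset ℕ → ℝ) (k n : ℕ) (h : n < k) : cf w k n = 0 := by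
  apply sum_eq_zero
  intro lam _
  rw [if_neg]
  have := card_le_part lam
  omega

lemma cf_zero (w : Multiset ℕ → ℝ) (n : ℕ) : cf w 0 n = if n = 0 then w 0 else 0 := by
  unfold cf
  rcases n with _ | n
  · simp
  · simp only [Nat.add_eq_zero_iff, one_ne_zero, and_false, if_false]
    apply sum_eq_zero
    intro lam _
    rw [if_neg]
    intro h
    have := lam.parts_sum
    rw [Multiset.card_eq_zero.1 h] at this
    simp at this

lemma cf_rec (w w' : Multiset ℕ → ℝ) (c : ℕ → ℝ) (A : ℝ) (k n : ℕ)
    (h : ∀ s : Multiset ℕ, 0 ∉ s → s.card ≤ k → w (Phi k s) = A * (c s.card * w' s)) :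
    cf w k (n+k) = A * ∑ j ∈ range (k+1), c j * cf w' j n := by
  unfold cf
  rw [sum_shift]
  simp_rw [mul_sum]
  rw [sum_comm]
  apply sum_congr rfl
  intro mu _
  simp only [mul_ite, mul_zero]
  rw [sum_ite_eq]
  simp only [mem_range, Nat.lt_succ_iff]
  split_ifs with h1
  · exact h _ (fun h0 => absurd (mu.parts_pos h0) (by simp)) h1
  · rfl

open PowerSeries in
lemma ps_rec (w w' : Multiset ℕ → ℝ) (c : ℕ → ℝ) (A : ℝ) (k : ℕ)
    (h : ∀ s : Multiset ℕ, 0 ∉ s → s.card ≤ k → w (Phi k s) = A * (c s.card * w' s)) :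
    PowerSeries.mk (cf w k) = X^k * C A * ∑ j ∈ range (k+1), C (c j) * PowerSeries.mk (cf w' j) := by
  ext n
  rw [mul_assoc, coeff_X_pow_mul', coeff_mk]
  split_ifs with hn
  · obtain ⟨l, rfl⟩ := Nat.exists_eq_add_of_le' hn
    rw [cf_rec w w' c A k l h, Nat.add_sub_cancel, coeff_C_mul, map_sum]
    simp
  · exact cf_lt _ _ _ (by omega)

end parts
section assembly
open PowerSeries

/-- coefficients of `1/(U;x)_n` -/
noncomputable def ic (x : ℝ) (n l : ℕ) : ℝ := PP (x^n) x l / PP x x l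

lemma ic_zero (x : ℝ) (n : ℕ) : ic x n 0 = 1 := by simp [ic, PP_zero]

lemma ic_zero_succ (x : ℝ) (l : ℕ) : ic x 0 (l+1) = 0 := by
  simp [ic, PP_succ']

lemma ic_rec (x : ℝ) (hx : ∀ j, 1 - x * x^j ≠ 0) (n l : ℕ) :
    ic x (n+1) (l+1) - x^n * ic x (n+1) l = ic x n (l+1) := by
  have h1 := PP_ne x x hx l
  have h2 := hx l
  unfold ic
  rw [PP_succ _ _ l, PP_succ x x l, PP_succ' (x^n), pow_succ x n]
  have e : x^n * x * x^l = x^n * (x * x^l) := by ring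
  rw [e]
  generalize x * x^l = y at h2 ⊢
  field_simp
  ring

/-- the series `1/(U;x)_n` -/
noncomputable def iP (t x : ℝ) (n : ℕ) : PowerSeries ℝ :=
  PowerSeries.mk (fun N => if Even N then t^N * ic x n (N/2) else 0)

lemma iP_zero (t x : ℝ) : iP t x 0 = 1 := by
  ext N
  simp only [iP, coeff_mk, coeff_one]
  rcases N with _ | N
  · simp [ic_zero]
  · rw [if_neg (show ¬ (N + 1 = 0) by omega)]
    split_ifs with h
    · obtain ⟨l, hl⟩ : ∃ l, (N+1)/2 = l+1 := ⟨(N+1)/2-1, by rw [Nat.even_iff] at h; omega⟩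
      rw [hl, ic_zero_succ, mul_zero]
    · rfl

lemma iP_rec (t x : ℝ) (hx : ∀ j, 1 - x * x^j ≠ 0) (n : ℕ) :
    (1 - (X^2 * C (t^2)) * (C x)^n) * iP t x (n+1) = iP t x n := by
  ext N
  have : (1 - (X^2 * C (t^2)) * (C x)^n) * iP t x (n+1) = iP t x (n+1) - X^2 * (C (t^2 * x^n) * iP t x (n+1)) := by
    rw [map_mul, map_pow C x]; ring
  rw [this, map_sub, coeff_X_pow_mul', coeff_C_mul]
  simp only [iP, coeff_mk]
  rcases N with _ | _ | N
  · simp [ic_zero]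
  · simp
  · have e : (N+1+1)/2 = N/2+1 := by omega
    have e2 : Even (N+1+1) ↔ Even N := by simp [Nat.even_add_one]
    simp only [e, e2]
    rw [if_pos (show 2 ≤ N+1+1 by omega), show N+1+1-2 = N by omega, ← ic_rec x hx n]
    split_ifs
    · ring
    · ring

lemma PP_map {K L : Type*} [Field K] [Field L] (f : K →+* L) (a x : K) (n : ℕ) :
    PP (f a) (f x) n = f (PP a x n) := by
  simp [PP, map_prod]

lemma ps_ne (k : ℕ) (hk : k ≠ 0) (a : PowerSeries ℝ) : (1 - X^k * a : PowerSeries ℝ) ≠ 0 := by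
  intro h
  have := congrArg constantCoeff h
  simp [hk] at this

lemma closed_series_aux {K : Type*} [Field K] (φ : PowerSeries ℝ →+* K) (hφ : Function.Injective φ) (t x : ℝ) (ht : t ≠ 0) (hxt : x = t^4) (hx : ∀ j, 1 - x * x^j ≠ 0) (n : ℕ) :
    PowerSeries.mk (cf (wC t x) (2*n)) = C (t^(2*n) * x^(n^2) / PP x x n) * (X^(2*n) * iP t x n) ∧
    PowerSeries.mk (cf (wC t x) (2*n+1)) = C (t^(2*(n+1)) * x^(n^2+n) / PP x x n) * (X^(2*(n+1)) * iP t x (n+1)) := by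
  let f : ℝ →+* K := φ.comp C
  have hfC : ∀ a, φ (C a) = f a := fun a => rfl
  have hf : Function.Injective f := f.injective
  have hne : ∀ a : PowerSeries ℝ, a ≠ 0 → φ a ≠ 0 := fun a ha h => ha (hφ (by rw [h, map_zero]))
  set U : PowerSeries ℝ := X^2 * C (t^2) with hUdef
  have hxK : ∀ j, 1 - f x * (f x)^j ≠ 0 := fun j => by
    rw [← map_pow, ← map_mul, ← map_one f, ← map_sub]
    exact (map_ne_zero f).2 (hx j)
  have hUK : ∀ j, 1 - φ U * (f x)^j ≠ 0 := fun j => by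
    rw [← hfC, ← map_pow, ← map_mul, ← map_one φ, ← map_sub]
    apply hne
    rw [hUdef, mul_assoc]
    exact ps_ne 2 (by norm_num) _
  have hinv : ∀ n, PP (φ U) (f x) n * φ (iP t x n) = 1 := by
    intro n
    induction n with
    | zero => simp [PP_zero, iP_zero]
    | succ n ih =>
      have key : φ (iP t x n) = (1 - φ U * f x ^ n) * φ (iP t x (n+1)) := by
        rw [← iP_rec t x hx n, map_mul]
        simp [hfC, hUdef]
      rw [PP_succ, mul_assoc, ← key, ih]
  have hinv' : ∀ n, PP (φ U) (f x) n = (φ (iP t x n))⁻¹ := fun n => eq_inv_of_mul_eq_one_left (hinv n)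
  have w0C : wC t x 0 = 1 := by simp [wC, SQ, od, PR]
  have w0O : wO t x 0 = 1 := by simp [wO, SQ, od, PR]
  have z : ∀ w : Multiset ℕ → ℝ, w 0 = 1 → PowerSeries.mk (cf w 0) = 1 := by
    intro w hw
    ext n
    rw [coeff_mk, cf_zero, coeff_one, hw]
  have main := FG_unique (φ X) (f t) (φ U) (f x) (by rw [hxt, map_pow])
    (by rw [hUdef, map_mul, map_pow, hfC, map_pow]) hxK hUK
    (by
      intro k hk
      rw [← hfC]
      simp only [← map_pow, ← map_mul, ← map_one φ, ← map_sub]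
      apply hne
      rw [mul_assoc]
      exact ps_ne k (by omega) _)
    (fun k => φ (PowerSeries.mk (cf (wC t x) k))) (fun k => φ (PowerSeries.mk (cf (wO t x) k)))
    (by simp only [z _ w0C, map_one]) (by simp only [z _ w0O, map_one])
    (by
      intro k hk
      rw [ps_rec (wC t x) (wO t x) (fun j => if Even (k-j) then (PP x x ((k-j)/2))⁻¹ else 0) (t^(k*(k+1))) k]
      · rw [map_mul, map_mul, map_pow, hfC, map_pow, map_sum]
        congr 1
        apply sum_congr rfl
        intro j _
        rw [map_mul, hfC]
        split_ifs
        · rw [map_inv₀, PP_map]; ring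
        · simp
      · intro s h0 hs
        rw [wC_Phi t x ht k s h0 hs]
        congr 1
        split_ifs
        · ring
        · ring)
    (by
      intro k hk
      rw [ps_rec (wO t x) (wC t x) (fun j => (PP x x ((k-j)/2))⁻¹) (t^(k*(k-1))) k]
      · rw [map_mul, map_mul, map_pow, hfC, map_pow, map_sum]
        congr 1
        apply sum_congr rfl
        intro j _
        rw [map_mul, hfC, map_inv₀, PP_map]; ring
      · intro s h0 hs
        rw [wO_Phi t x ht k hk s h0 hs]
        congr 1
        ring)
  constructor
  · apply hφ
    have := (main (2*n)).1
    rw [this, Fc_even, hinv', hUdef, PP_map]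
    simp only [map_mul, hfC, map_pow, map_div₀, div_mul_eq_div_div, div_inv_eq_mul]
    ring
  · apply hφ
    have := (main (2*n+1)).1
    rw [this, Fc_odd, hinv', hUdef, PP_map]
    simp only [map_mul, hfC, map_pow, map_div₀, div_mul_eq_div_div, div_inv_eq_mul]
    ring

lemma closed_series (t x : ℝ) (ht : t ≠ 0) (hxt : x = t^4) (hx : ∀ j, 1 - x * x^j ≠ 0) (n : ℕ) :
    PowerSeries.mk (cf (wC t x) (2*n)) = C (t^(2*n) * x^(n^2) / PP x x n) * (X^(2*n) * iP t x n) ∧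
    PowerSeries.mk (cf (wC t x) (2*n+1)) = C (t^(2*(n+1)) * x^(n^2+n) / PP x x n) * (X^(2*(n+1)) * iP t x (n+1)) :=
  closed_series_aux (algebraMap _ (FractionRing (PowerSeries ℝ))) (IsFractionRing.injective _ _) t x ht hxt hx n

lemma cf_closed_even (t x : ℝ) (ht : t ≠ 0) (hxt : x = t^4) (hx : ∀ j, 1 - x * x^j ≠ 0) (n m : ℕ) (h : n ≤ m) :
    cf (wC t x) (2*n) (2*m) = t^(2*m) * (x^(n^2) / PP x x n * ic x n (m-n)) := by
  have := congrArg (coeff (2*m)) (closed_series t x ht hxt hx n).1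
  rw [coeff_mk, coeff_C_mul, coeff_X_pow_mul', if_pos (by omega), iP, coeff_mk, ← Nat.mul_sub, if_pos (by simp)] at this
  rw [this, show 2 * (m-n)/2 = m-n by omega, show t^(2*m) = t^(2*n) * t^(2*(m-n)) by rw [← pow_add]; congr 1; omega]
  ring

lemma cf_closed_odd (t x : ℝ) (ht : t ≠ 0) (hxt : x = t^4) (hx : ∀ j, 1 - x * x^j ≠ 0) (n m : ℕ) (h : n + 1 ≤ m) :
    cf (wC t x) (2*n+1) (2*m) = t^(2*m) * (x^(n^2+n) / PP x x n * ic x (n+1) (m-(n+1))) := by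
  have := congrArg (coeff (2*m)) (closed_series t x ht hxt hx n).2
  rw [coeff_mk, coeff_C_mul, coeff_X_pow_mul', if_pos (by omega), iP, coeff_mk, ← Nat.mul_sub, if_pos (by simp)] at this
  rw [this, show 2 * (m-(n+1))/2 = m-(n+1) by omega, show t^(2*m) = t^(2*(n+1)) * t^(2*(m-(n+1))) by rw [← pow_add]; congr 1; omega]
  ring

lemma weighted (t x q : ℝ) (ht : t ≠ 0) (hxt : x = t^4) (hqt : q * t^2 = 1) (hq : q + 1 ≠ 0)
    (hx : ∀ j, 1 - x * x^j ≠ 0) (M : ℕ) :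
    ∑ lam : Nat.Partition (2*(M+1)), (1 - t^(2*lam.parts.card)) * wC t x lam.parts
     = t^(2*(M+1)) * (1 / (q+1) * ∑ s ∈ range (M+1), (-1)^s * x^((s+1).choose 2) * (q + x^(s+1)) / PP x x (M-s)) := by
  have h1 : ∑ lam : Nat.Partition (2*(M+1)), (1 - t^(2*lam.parts.card)) * wC t x lam.parts
     = ∑ k ∈ range (2*(M+1)+1), (1 - t^(2*k)) * cf (wC t x) k (2*(M+1)) := by
    unfold cf
    simp_rw [mul_sum]
    rw [sum_comm]
    apply sum_congr rfl
    intro lam _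
    simp only [mul_ite, mul_zero]
    rw [sum_ite_eq, if_pos]
    have := card_le_part lam
    simp
    omega
  have hqx : q^2 * x = 1 := by
    rw [hxt]; linear_combination (q * t^2 + 1) * hqt
  rw [h1, sum_range_even, ← final_id x q hx M hq hqx, mul_sum, sum_range_succ', add_right_comm, ← sum_add_distrib]
  simp only [mul_zero, pow_zero, sub_self, zero_mul, add_zero]
  apply sum_congr rfl
  intro i hi
  have hi' : i + 1 ≤ M + 1 := by simp at hi; omega
  rw [cf_closed_even t x ht hxt hx (i+1) (M+1) hi', cf_closed_odd t x ht hxt hx i (M+1) hi']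
  rw [show M + 1 - (i+1) = M - i by omega]
  change _ = t^(2*(M+1)) * (x^(i^2+i) / PP x x i * ic x (i+1) (M-i) * (1 - (q-1) * x^(i+1)))
  have e1 : t^(2*(2*(i+1))) = x * x^i := by rw [hxt]; ring
  have e2 : t^(2*(2*i+1)) = q * (x * x^i) := by
    rw [← e1, show 2*(2*(i+1)) = 2*(2*i+1) + 2 by ring, pow_add]
    linear_combination (-t^(2*(2*i+1))) * hqt
  have e3 : x^((i+1)^2) = x^(i^2+i) * (x * x^i) := by ring
  rw [e1, e2, e3, PP_succ, pow_succ' x i]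
  have h3 := hx i
  have h4 := PP_ne x x hx i
  generalize x^(i^2+i) = w
  generalize x * x^i = y at h3 ⊢
  field_simp
  ring

end assembly

end Anz

open Classical in
/-- Anzanello's first conjecture. -/
theorem anzanello_first_conjecture (q : ℝ) (hq : 1 < q) (m : ℕ) (hm : 1 ≤ m) :
    (∑ lam : Nat.Partition (2 * m),
      if ∀ i, Odd i → Even (lam.parts.count i) then
        (1 - q ^ (-(colLen lam 1 : ℝ))) /
          (q ^ ((((∑ i ∈ Finset.Icc 1 (2 * m), ((colLen lam i : ℝ)) ^ 2))
                + (numOddParts lam : ℝ)) / 2)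
            * ∏ i ∈ Finset.Icc 1 (2 * m),
                qPoch (q ^ (-2 : ℤ)) (q ^ (-2 : ℤ)) (lam.parts.count i / 2))
      else 0)
    = 1 / (q ^ m * (q + 1)) * ∑ i ∈ Finset.Icc 1 m,
        (-1 : ℝ) ^ (i - 1) * (q ^ (2 * i + 1) + 1)
          / (q ^ (i * (i + 1)) * qPoch (q ^ (-2 : ℤ)) (q ^ (-2 : ℤ)) (m - i)) := by
  obtain ⟨M, rfl⟩ : ∃ M, m = M + 1 := ⟨m - 1, by omega⟩
  have hq0 : 0 < q := by linarith
  set r : ℝ := q ^ ((1:ℝ)/2) with hr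
  have hr0 : 0 < r := Real.rpow_pos_of_pos hq0 _
  have hrq : r^2 = q := by
    rw [hr, ← Real.rpow_natCast, ← Real.rpow_mul hq0.le]; norm_num
  set x : ℝ := q ^ (-2 : ℤ) with hxd
  have hxq : x = (q^2)⁻¹ := by rw [hxd, zpow_neg]; norm_cast
  have hx0 : 0 < x := by rw [hxq]; positivity
  have hx1 : x < 1 := by rw [hxq]; exact inv_lt_one_of_one_lt₀ (by nlinarith)
  have hxt : x = r⁻¹^4 := by rw [hxq, ← hrq]; field_simp
  have hx : ∀ j, 1 - x * x^j ≠ 0 := fun j => by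
    rw [← pow_succ']
    have := pow_lt_one₀ hx0.le hx1 (n := j+1) (by omega)
    linarith
  have W := Anz.weighted r⁻¹ x q (by positivity) hxt (by rw [← hrq]; field_simp) (by positivity) hx M
  have hqp : ∀ n, qPoch x x n = Anz.PP x x n := fun n => rfl
  trans ∑ lam : Nat.Partition (2*(M+1)), (1 - r⁻¹^(2*lam.parts.card)) * Anz.wC r⁻¹ x lam.parts
  · apply Finset.sum_congr rfl
    intro lam _
    unfold Anz.wC
    rw [mul_ite, mul_zero]
    have hc : ∀ i, colLen lam i = Anz.col lam.parts i := fun i => rfl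
    have h1 : colLen lam 1 = lam.parts.card := by
      unfold colLen
      rw [Multiset.filter_eq_self.2]
      intro a ha
      exact lam.parts_pos ha
    have h2 : q ^ (-(colLen lam 1 : ℝ)) = r⁻¹^(2*lam.parts.card) := by
      rw [h1, Real.rpow_neg hq0.le, Real.rpow_natCast, inv_pow, pow_mul, hrq]
    have hI : ∀ N, Finset.Icc 1 N = (Finset.range N).image (· + 1) := by
      intro N; ext a; simp only [Finset.mem_Icc, Finset.mem_image, Finset.mem_range]
      constructor
      · intro h; exact ⟨a-1, by omega, by omega⟩
      · rintro ⟨b, hb, rfl⟩; omega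
    have h3 : (((∑ i ∈ Finset.Icc 1 (2 * (M+1)), ((colLen lam i : ℝ)) ^ 2)) + (numOddParts lam : ℝ))
        = ((Anz.SQ lam.parts.sum lam.parts + Anz.od lam.parts : ℕ) : ℝ) := by
      rw [hI, Finset.sum_image (by intro a _ b _ h; simpa using h), lam.parts_sum, Anz.SQ]
      push_cast
      rfl
    have h4 : ∏ i ∈ Finset.Icc 1 (2 * (M+1)), qPoch x x (lam.parts.count i / 2) = Anz.PR x lam.parts.sum lam.parts := by
      rw [hI, Finset.prod_image (by intro a _ b _ h; simpa using h), lam.parts_sum, Anz.PR]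
      rfl
    rw [h2, h3, h4]
    have h5 : ∀ N : ℕ, q ^ ((N : ℝ)/2) = r^N := fun N => by
      rw [hr, ← Real.rpow_natCast, ← Real.rpow_mul hq0.le]; congr 1; ring
    rw [h5]
    split_ifs
    · rw [inv_pow r (_ + _)]
      rw [div_mul_eq_div_div, div_eq_mul_inv _ (r ^ _), mul_div_assoc]
    · rfl
  rw [W]
  have hI : Finset.Icc 1 (M+1) = (Finset.range (M+1)).image (· + 1) := by
    ext a; simp only [Finset.mem_Icc, Finset.mem_image, Finset.mem_range]
    constructor
    · intro h; exact ⟨a-1, by omega, by omega⟩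
    · rintro ⟨b, hb, rfl⟩; omega
  rw [hI, Finset.sum_image (by intro a _ b _ h; simpa using h), ← mul_assoc]
  congr 1
  · rw [inv_pow, pow_mul, hrq]; field_simp
  apply Finset.sum_congr rfl
  intro s hs
  rw [hqp, Nat.add_sub_cancel, show M + 1 - (s+1) = M - s by omega]
  have hP := Anz.PP_ne x x hx (M-s)
  have e1 : x^((s+1).choose 2) = (q^(s*(s+1)))⁻¹ := by
    have : 2 * (s+1).choose 2 = s*(s+1) := by
      rw [Nat.choose_two_right, Nat.mul_div_cancel' (Nat.even_mul_pred_self (s+1)).two_dvd]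
      simp; ring
    rw [hxq, inv_pow, ← pow_mul, this]
  have e2 : q + x^(s+1) = (q^(2*(s+1)+1) + 1) / q^(2*(s+1)) := by
    rw [hxq, inv_pow, ← pow_mul]; field_simp
    ring
  have e3 : q^((s+1)*(s+1+1)) = q^(s*(s+1)) * q^(2*(s+1)) := by rw [← pow_add]; congr 1; ring
  rw [e1, e2, e3]
  field_simp
end

section
/- Let q be a real number with q > 1 and let m ≥ 1 be an integer. Then the sum, over all integer partitions λ of 2m+1 in which every even part occurs with even multiplicity, of (1 - q^{-λ'_1}) / ( q^{( Σ_i (λ'_i)^2 - o(λ) )/2} · Π_i (1/q^2; 1/q^2)_{⌊m_i(λ)/2⌋} ) equals 1/( q^m (1/q^2; 1/q^2)_m ) + (1/q^{m+1}) · Σ_{i=0}^{m} (-1)^{i-1} / ( q^{i(i+1)} (1/q^2; 1/q^2)_{m-i} ). -/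
namespace Anz

open Finset

/-- Gaussian binomial coefficient. -/
noncomputable def gb (Q : ℝ) : ℕ → ℕ → ℝ
  | _, 0 => 1
  | 0, _ + 1 => 0
  | n + 1, k + 1 => gb Q n k + Q ^ (k + 1) * gb Q n (k + 1)

lemma gb_zero (Q : ℝ) (n : ℕ) : gb Q n 0 = 1 := by cases n <;> simp [gb]

lemma gb_succ (Q : ℝ) (n k : ℕ) :
    gb Q (n+1) (k+1) = gb Q n k + Q ^ (k + 1) * gb Q n (k + 1) := by simp [gb]

lemma gb_gt (Q : ℝ) : ∀ n k : ℕ, n < k → gb Q n k = 0 := by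
  intro n
  induction n with
  | zero => intro k hk; obtain ⟨k, rfl⟩ := Nat.exists_eq_add_of_lt hk; simp [gb]
  | succ n ih =>
    intro k hk
    obtain ⟨k, rfl⟩ : ∃ j, k = j + 1 := ⟨k - 1, by omega⟩
    rw [gb_succ, ih k (by omega), ih (k+1) (by omega)]; simp

lemma gb_self (Q : ℝ) (n : ℕ) : gb Q n n = 1 := by
  induction n with
  | zero => simp [gb]
  | succ n ih => rw [gb_succ, ih, gb_gt Q n (n+1) (by omega)]; simp

/-- The other Pascal rule. -/
lemma gb_succ' (Q : ℝ) (n k : ℕ) :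
    Q ^ k * gb Q (n+1) (k+1) = Q ^ k * gb Q n (k+1) + Q ^ n * gb Q n k := by
  induction n generalizing k with
  | zero =>
    rcases k with _ | k <;> simp [gb]
  | succ n ih =>
    rcases k with _ | j
    · have h := ih 0
      rw [gb_succ Q (n+1) 0]
      rw [gb_zero] at *
      have h2 := gb_succ Q n 0
      rw [gb_zero] at h2
      simp only [pow_zero, zero_add, pow_one, one_mul, mul_one] at *
      rw [pow_succ]
      linear_combination Q * h - h2
    · have h1 := ih j
      have h2 := ih (j+1)
      rw [gb_succ Q (n+1) (j+1)]
      have h3 := gb_succ Q n (j+1)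
      have h4 := gb_succ Q n j
      simp only [pow_succ] at *
      linear_combination Q * h1 + Q^j*Q*Q * h2 - Q^j*Q*h3 - Q^n*Q*h4

/-- `(Q;Q)_n`. -/
noncomputable abbrev P (Q : ℝ) (n : ℕ) : ℝ := qPoch Q Q n

lemma P_zero (Q : ℝ) : P Q 0 = 1 := by simp [P, qPoch]

lemma P_succ (Q : ℝ) (n : ℕ) : P Q (n+1) = P Q n * (1 - Q ^ (n+1)) := by
  simp only [P, qPoch, Finset.prod_range_succ]; ring

lemma one_sub_ne {Q : ℝ} (h0 : 0 < Q) (h1 : Q < 1) (n : ℕ) : 1 - Q ^ (n+1) ≠ 0 := by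
  have := pow_lt_one₀ h0.le h1 (Nat.succ_ne_zero n)
  intro h
  simp only [Nat.succ_eq_add_one] at this
  linarith

lemma P_ne {Q : ℝ} (h0 : 0 < Q) (h1 : Q < 1) (n : ℕ) : P Q n ≠ 0 := by
  induction n with
  | zero => simp [P_zero]
  | succ n ih => rw [P_succ]; exact mul_ne_zero ih (one_sub_ne h0 h1 n)

lemma gb_mul (Q : ℝ) (n k : ℕ) :
    gb Q (n+k) k * (P Q n * P Q k) = P Q (n+k) := by
  induction n generalizing k with
  | zero => simp [gb_self, P_zero]
  | succ n ihn =>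
    induction k with
    | zero => simp [gb_zero, P_zero]
    | succ k ihk =>
      have h := ihn (k+1)
      rw [show n + 1 + (k + 1) = (n + 1 + k) + 1 by ring, gb_succ, P_succ Q (n+1+k)]
      rw [show n + (k + 1) = n + 1 + k by ring] at h
      rw [← ihk] at *
      rw [P_succ Q k] at *
      rw [P_succ Q n] at *
      rw [show n + 1 + k + 1 = (n+1) + (k+1) by ring, pow_add]
      linear_combination (1 - Q^(n+1)) * Q^(k+1) * h

lemma vander_s1 {Q : ℝ} (h0 : 0 < Q) (h1 : Q < 1) (n : ℕ) : ∀ a s : ℕ,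
    ∑ b ∈ range (a+1), Q ^ (b*(b+s)) * gb Q n b / (P Q (b+s) * P Q (a-b))
      = gb Q (n+a+s) a / P Q (a+s) := by
  induction n with
  | zero =>
    intro a s
    rw [Finset.sum_range_succ', Finset.sum_eq_zero]
    · have := gb_mul Q s a
      rw [show 0 + a + s = s + a by ring, show a + s = s + a by ring]
      rw [← this]
      have := P_ne h0 h1 s
      have := P_ne h0 h1 a
      have h3 := P_ne h0 h1 (s+a)
      rw [← gb_mul] at h3
      have : gb Q (s+a) a ≠ 0 := left_ne_zero_of_mul h3
      simp [gb_zero]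
      field_simp
    · intro i _; simp [gb]
  | succ n ih =>
    intro a s
    rcases a with _ | a
    · simp [gb_zero, P_zero]
    · have e1 := ih (a+1) s
      have e2 := ih a (s+1)
      rw [Finset.sum_range_succ'] at e1 ⊢
      have key : ∀ c ∈ range (a+1),
          Q ^ ((c+1)*(c+1+s)) * gb Q (n+1) (c+1) / (P Q (c+1+s) * P Q (a+1-(c+1)))
          = Q ^ ((c+1)*(c+1+s)) * gb Q n (c+1) / (P Q (c+1+s) * P Q (a+1-(c+1)))
            + Q^(n+s+1) * (Q ^ (c*(c+(s+1))) * gb Q n c / (P Q (c+(s+1)) * P Q (a-c))) := by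
        intro c _
        rw [show a + 1 - (c+1) = a - c by omega, show c + (s+1) = c + 1 + s by ring]
        rw [← mul_div_assoc, ← add_div]
        congr 1
        have := gb_succ' Q n c
        rw [show (c+1)*(c+1+s) = c*(c+1+s) + s + 1 + c by ring]
        simp only [pow_add, pow_one] at *
        linear_combination Q^(c*(c+1+s)) * Q^s * Q * this
      rw [Finset.sum_congr rfl key, Finset.sum_add_distrib, ← Finset.mul_sum, e2]
      have h5 := gb_succ' Q (n+(a+1)+s) a
      have hQ : Q ^ a ≠ 0 := pow_ne_zero _ h0.ne'
      have h6 : gb Q (n+1+(a+1)+s) (a+1) = gb Q (n+(a+1)+s) (a+1)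
          + Q^(n+s+1) * gb Q (n + (a+1) + s) a := by
        apply mul_left_cancel₀ hQ
        rw [show n+1+(a+1)+s = n+(a+1)+s+1 by ring, h5]
        rw [show n+(a+1)+s = a + (n+s+1) by ring, pow_add]
        ring
      rw [h6, add_div]
      rw [← e1]
      rw [show n + a + (s+1) = n + (a+1) + s by ring, show a + (s+1) = a+1+s by ring]
      simp only [gb_zero]
      ring

lemma sumJ {Q : ℝ} (h0 : 0 < Q) (h1 : Q < 1) (n : ℕ) : ∀ s : ℕ, ∀ M, n ≤ M →
    ∑ b ∈ range (M+1), Q ^ (b*(b+s)) * gb Q n b / P Q (b+s) = 1 / P Q (n+s) := by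
  induction n with
  | zero =>
    intro s M _
    rw [Finset.sum_range_succ', Finset.sum_eq_zero]
    · simp [gb_zero]
    · intro i _; simp [gb]
  | succ n ih =>
    intro s M hM
    obtain ⟨a, rfl⟩ : ∃ a, M = a + 1 := ⟨M-1, by omega⟩
    have e1 := ih s (a+1) (by omega)
    have e2 := ih (s+1) a (by omega)
    rw [Finset.sum_range_succ'] at e1 ⊢
    have key : ∀ c ∈ range (a+1),
          Q ^ ((c+1)*(c+1+s)) * gb Q (n+1) (c+1) / (P Q (c+1+s))
          = Q ^ ((c+1)*(c+1+s)) * gb Q n (c+1) / (P Q (c+1+s))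
            + Q^(n+s+1) * (Q ^ (c*(c+(s+1))) * gb Q n c / (P Q (c+(s+1)))) := by
        intro c _
        rw [show c + (s+1) = c + 1 + s by ring]
        rw [← mul_div_assoc, ← add_div]
        congr 1
        have := gb_succ' Q n c
        rw [show (c+1)*(c+1+s) = c*(c+1+s) + s + 1 + c by ring]
        simp only [pow_add, pow_one] at *
        linear_combination Q^(c*(c+1+s)) * Q^s * Q * this
    rw [Finset.sum_congr rfl key, Finset.sum_add_distrib, ← Finset.mul_sum, e2]
    simp only [gb_zero] at *
    rw [add_right_comm, e1]
    rw [show n + (s+1) = n+s+1 by ring, show n + 1 + s = n+s+1 by ring, P_succ]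
    have := P_ne h0 h1 (n+s)
    have := one_sub_ne h0 h1 (n+s)
    field_simp
    ring

/-- Right-hand side auxiliary sum. -/
noncomputable def R (Q : ℝ) (m : ℕ) : ℝ :=
  ∑ i ∈ range (m+1), (-1) ^ i * Q ^ (i*(i+1)/2) / P Q (m-i)

lemma tri (i : ℕ) : (i+1)*(i+1+1)/2 = i*(i+1)/2 + (i+1) := by
  rw [show (i+1)*(i+1+1) = i*(i+1) + (i+1)*2 by ring, Nat.add_mul_div_right _ _ (by norm_num)]

lemma R_succ {Q : ℝ} (h0 : 0 < Q) (h1 : Q < 1) (m : ℕ) :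
    R Q (m+1) = (1 - Q^(m+1)) * R Q m + Q^(m+1) / P Q (m+1) := by
  have e : R Q (m+1) - R Q m = Q^(m+1) * (1 / P Q (m+1) - R Q m) := by
    have hd : R Q (m+1) - R Q m =
        ∑ i ∈ range (m+1+1), (-1) ^ i * Q ^ (i*(i+1)/2) * Q^(m+1-i) / P Q (m+1-i) := by
      unfold R
      rw [Finset.sum_range_succ _ (m+1), Finset.sum_range_succ _ (m+1), add_sub_right_comm,
        ← Finset.sum_sub_distrib]
      congr 1
      · apply Finset.sum_congr rfl
        intro i hi
        have hi := Finset.mem_range.1 hi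
        rw [show m + 1 - i = (m - i) + 1 by omega, P_succ]
        have := P_ne h0 h1 (m-i)
        have := one_sub_ne h0 h1 (m-i)
        field_simp
        ring
      · simp
    rw [hd, Finset.sum_range_succ', mul_sub]
    unfold R
    rw [Finset.mul_sum, sub_eq_add_neg, ← Finset.sum_neg_distrib, add_comm]
    congr 1
    · simp; ring
    · apply Finset.sum_congr rfl
      intro i hi
      have hi := Finset.mem_range.1 hi
      rw [tri, show m + 1 - (i+1) = m - i by omega]
      rw [show Q^(m+1) = Q^(m-i) * Q^(i+1) by rw [← pow_add]; congr 1; omega]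
      rw [pow_add, pow_succ (-1 : ℝ)]
      ring
  linear_combination e

lemma sumH {Q : ℝ} (h0 : 0 < Q) (h1 : Q < 1) (n : ℕ) : ∀ M, n ≤ M →
    ∑ a ∈ range (M+1), Q ^ (a*(a+1)) * gb Q n a / P Q a = R Q n := by
  induction n with
  | zero =>
    intro M _
    rw [Finset.sum_range_succ', Finset.sum_eq_zero]
    · simp [gb_zero, R]
    · intro i _; simp [gb]
  | succ n ih =>
    intro M hM
    have e1 := ih M (by omega)
    have e2 := sumJ h0 h1 (n+1) 0 M hM
    rw [R_succ h0 h1, ← e1]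
    rw [div_eq_mul_one_div, show n + 1 = n + 1 + 0 by ring, ← e2]
    rw [Finset.mul_sum, Finset.mul_sum, ← Finset.sum_add_distrib]
    apply Finset.sum_congr rfl
    intro a _
    rw [add_zero, add_zero]
    have := P_ne h0 h1 a
    rcases a with _ | a
    · simp [gb_zero, P_zero]
    · rw [← mul_div_assoc, ← mul_div_assoc, ← add_div]
      congr 1
      have g1 := gb_succ Q n a
      have g2 := gb_succ' Q n a
      rw [show (a+1)*(a+1+1) = (a+1)*(a+1) + 1 + a by ring]
      rw [pow_add, pow_add]
      linear_combination Q^((a+1)*(a+1)) * Q * g2 - Q^n*Q*Q^((a+1)*(a+1)) * g1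

/-- Multisets of positive integers with sum `n` and `k` elements. -/
noncomputable def Pt (n k : ℕ) : Finset (Multiset ℕ) :=
  ((univ : Finset (Nat.Partition n)).image (fun l => l.parts)).filter (fun s => s.card = k)

lemma mem_Pt {n k : ℕ} {s : Multiset ℕ} :
    s ∈ Pt n k ↔ (∀ i ∈ s, 0 < i) ∧ s.sum = n ∧ s.card = k := by
  simp only [Pt, mem_filter, mem_image, mem_univ, true_and]
  constructor
  · rintro ⟨⟨l, rfl⟩, h⟩
    exact ⟨fun i hi => l.parts_pos hi, l.parts_sum, h⟩
  · rintro ⟨h1, h2, h3⟩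
    exact ⟨⟨⟨s, fun {i} hi => h1 i hi, h2⟩, rfl⟩, h3⟩

lemma card_le_sum (s : Multiset ℕ) (h : ∀ i ∈ s, 0 < i) : s.card ≤ s.sum := by
  induction s using Multiset.induction with
  | empty => simp
  | cons a s ih =>
    have h1 := ih (fun i hi => h i (Multiset.mem_cons_of_mem hi))
    have h2 := h a (Multiset.mem_cons_self a s)
    simp only [Multiset.card_cons, Multiset.sum_cons]; omega

lemma Pt_empty {n k : ℕ} (h : n < k) : Pt n k = ∅ := by
  ext s
  simp only [mem_Pt, notMem_empty, iff_false]
  rintro ⟨h1, h2, h3⟩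
  have := card_le_sum s h1
  omega

lemma sum_partition (n : ℕ) (F : Multiset ℕ → ℝ) :
    ∑ l : Nat.Partition n, F l.parts = ∑ k ∈ range (n+1), ∑ s ∈ Pt n k, F s := by
  have inj : Function.Injective (fun l : Nat.Partition n => l.parts) :=
    fun a b h => Nat.Partition.ext h
  have : ∑ l : Nat.Partition n, F l.parts
      = ∑ s ∈ (univ : Finset (Nat.Partition n)).image (fun l => l.parts), F s := by
    rw [Finset.sum_image (fun a _ b _ h => inj h)]
  rw [this]
  symm
  apply Finset.sum_fiberwise_of_maps_to
  intro s hs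
  obtain ⟨l, _, rfl⟩ := Finset.mem_image.1 hs
  have := card_le_sum l.parts (fun i hi => l.parts_pos hi)
  rw [l.parts_sum] at this
  simp only [Finset.mem_range]; omega

/-- Add a column of length `card t + d`. -/
def up (t : Multiset ℕ) (d : ℕ) : Multiset ℕ := t.map Nat.succ + Multiset.replicate d 1

/-- Remove the first column. -/
def down (s : Multiset ℕ) : Multiset ℕ := (s.filter (fun i => 1 < i)).map Nat.pred

lemma down_up (t : Multiset ℕ) (ht : ∀ i ∈ t, 0 < i) (d : ℕ) : down (up t d) = t := by
  unfold down up
  rw [Multiset.filter_add, Multiset.filter_eq_self.2, Multiset.filter_eq_nil.2, add_zero,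
    Multiset.map_map]
  · simp
  · intro i hi
    rw [Multiset.eq_of_mem_replicate hi]; simp
  · intro i hi
    obtain ⟨j, hj, rfl⟩ := Multiset.mem_map.1 hi
    have := ht j hj
    simp; omega

lemma up_down (s : Multiset ℕ) (hs : ∀ i ∈ s, 0 < i) :
    up (down s) (s.card - (down s).card) = s := by
  have h1 : (s.filter (fun i => 1 < i)) + (s.filter (fun i => ¬ 1 < i)) = s :=
    Multiset.filter_add_not _ _
  have h2 : s.filter (fun i => ¬ 1 < i)
      = Multiset.replicate (s.filter (fun i => ¬ 1 < i)).card 1 := by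
    rw [Multiset.eq_replicate]
    refine ⟨rfl, fun b hb => ?_⟩
    rw [Multiset.mem_filter] at hb
    have := hs b hb.1
    omega
  have h3 : s.card - (down s).card = (s.filter (fun i => ¬ 1 < i)).card := by
    have h4 := congrArg Multiset.card h1
    rw [Multiset.card_add] at h4
    have h5 : (down s).card = (s.filter (fun i => 1 < i)).card := by simp [down]
    omega
  rw [h3]
  unfold up
  rw [← h2]
  conv_rhs => rw [← h1]
  congr 1
  unfold down
  rw [Multiset.map_map]
  conv_rhs => rw [← Multiset.map_id (s.filter (fun i => 1 < i))]
  apply Multiset.map_congr rfl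
  intro x hx
  rw [Multiset.mem_filter] at hx
  simp only [Function.comp, id]
  exact Nat.succ_pred_eq_of_pos (by omega)

lemma card_up (t : Multiset ℕ) (d : ℕ) : (up t d).card = t.card + d := by simp [up]

lemma sum_map_succ (t : Multiset ℕ) : (t.map Nat.succ).sum = t.sum + t.card := by
  induction t using Multiset.induction with
  | empty => simp
  | cons a t ih => simp only [Multiset.map_cons, Multiset.sum_cons, Multiset.card_cons, ih]; omega

lemma sum_up (t : Multiset ℕ) (d : ℕ) : (up t d).sum = t.sum + (t.card + d) := by
  rw [up, Multiset.sum_add, sum_map_succ]; simp; ring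

lemma up_pos (t : Multiset ℕ) (d : ℕ) : ∀ i ∈ up t d, 0 < i := by
  intro i hi
  rcases Multiset.mem_add.1 hi with h | h
  · obtain ⟨j, hj, rfl⟩ := Multiset.mem_map.1 h; simp
  · rw [Multiset.eq_of_mem_replicate h]; simp

lemma down_pos (s : Multiset ℕ) : ∀ i ∈ down s, 0 < i := by
  intro i hi
  obtain ⟨j, hj, rfl⟩ := Multiset.mem_map.1 hi
  have := (Multiset.mem_filter.1 hj).2
  simp; omega

lemma card_down (s : Multiset ℕ) : (down s).card ≤ s.card := by
  simp only [down, Multiset.card_map]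
  exact Multiset.card_le_card (Multiset.filter_le _ _)

lemma sum_Pt {n k : ℕ} (hk : k ≤ n) (F : Multiset ℕ → ℝ) :
    ∑ s ∈ Pt n k, F s = ∑ j ∈ range (k+1), ∑ t ∈ Pt (n-k) j, F (up t (k-j)) := by
  rw [Finset.sum_sigma']
  refine Finset.sum_bij' (fun s _ => ⟨(down s).card, down s⟩) (fun x _ => up x.2 (k - x.1))
    ?_ ?_ ?_ ?_ ?_
  · intro s hs
    obtain ⟨h1, h2, h3⟩ := mem_Pt.1 hs
    have hc := card_down s
    have e := sum_up (down s) (s.card - (down s).card)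
    rw [up_down s h1] at e
    simp only [Finset.mem_sigma, Finset.mem_range, mem_Pt]
    exact ⟨by omega, down_pos s, by omega, trivial⟩
  · rintro ⟨j, t⟩ hx
    simp only [Finset.mem_sigma, Finset.mem_range, mem_Pt] at hx
    obtain ⟨h0, h1, h2, h3⟩ := hx
    rw [mem_Pt]
    refine ⟨up_pos _ _, ?_, ?_⟩
    · rw [sum_up]; simp only; omega
    · rw [card_up]; simp only; omega
  · intro s hs
    obtain ⟨h1, h2, h3⟩ := mem_Pt.1 hs
    simp only
    rw [← h3, up_down s h1]
  · rintro ⟨j, t⟩ hx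
    simp only [Finset.mem_sigma, Finset.mem_range, mem_Pt] at hx
    obtain ⟨h0, h1, h2, h3⟩ := hx
    simp only [down_up t h1, h3]
  · intro s hs
    obtain ⟨h1, h2, h3⟩ := mem_Pt.1 hs
    simp only
    rw [← h3, up_down s h1]

/-- Column length of a multiset. -/
def cl (s : Multiset ℕ) (i : ℕ) : ℕ := (s.filter (fun j => i ≤ j)).card

lemma count_up_one (t : Multiset ℕ) (ht : ∀ i ∈ t, 0 < i) (d : ℕ) : (up t d).count 1 = d := by
  unfold up
  rw [Multiset.count_add, Multiset.count_replicate_self, Multiset.count_eq_zero_of_notMem, zero_add]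
  intro h
  obtain ⟨j, hj, h⟩ := Multiset.mem_map.1 h
  have := ht j hj
  omega

lemma count_up (t : Multiset ℕ) (d i : ℕ) :
    (up t d).count (i+2) = t.count (i+1) := by
  unfold up
  rw [Multiset.count_add, Multiset.count_replicate, if_neg (by omega), add_zero]
  exact Multiset.count_map_eq_count' Nat.succ t Nat.succ_injective (i+1)

lemma count_zero (t : Multiset ℕ) (ht : ∀ i ∈ t, 0 < i) : t.count 0 = 0 :=
  Multiset.count_eq_zero_of_notMem (fun h => by simpa using ht 0 h)

lemma cl_up_one (t : Multiset ℕ) (d : ℕ) : cl (up t d) 1 = t.card + d := by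
  unfold cl
  rw [Multiset.filter_eq_self.2, card_up]
  intro i hi
  exact up_pos t d i hi

lemma cl_up (t : Multiset ℕ) (d i : ℕ) : cl (up t d) (i+2) = cl t (i+1) := by
  unfold cl up
  rw [Multiset.filter_add, Multiset.card_add, Multiset.filter_map, Multiset.card_map]
  rw [(Multiset.filter_eq_nil (s := Multiset.replicate d 1)).2, Multiset.card_zero, add_zero]
  · congr 1
    apply Multiset.filter_congr
    intro x _
    simp only [Function.comp]; omega
  · intro j hj
    rw [Multiset.eq_of_mem_replicate hj]; omega

lemma od_up (t : Multiset ℕ) (d : ℕ) : od (up t d) + od t = t.card + d := by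
  unfold od up
  rw [Multiset.filter_add, Multiset.card_add, Multiset.filter_map, Multiset.card_map]
  rw [(Multiset.filter_eq_self (s := Multiset.replicate d 1)).2]
  · have h1 : (t.filter (fun i => Odd i)) + (t.filter (fun i => ¬ Odd i)) = t :=
      Multiset.filter_add_not _ _
    have h2 : t.filter ((fun j => Odd j) ∘ Nat.succ) = t.filter (fun i => ¬ Odd i) := by
      apply Multiset.filter_congr
      intro x _
      simp [Function.comp, Nat.odd_add_one]
    have h3 := congrArg Multiset.card h1
    rw [Multiset.card_add] at h3
    rw [h2, Multiset.card_replicate]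
    omega
  · intro j hj
    rw [Multiset.eq_of_mem_replicate hj]; simp

/-- orthogonal condition -/
def CA (s : Multiset ℕ) : Prop := ∀ i, Even i → Even (s.count i)

/-- symplectic condition -/
def CB (s : Multiset ℕ) : Prop := ∀ i, Odd i → Even (s.count i)

lemma CA_up (t : Multiset ℕ) (ht : ∀ i ∈ t, 0 < i) (d : ℕ) : CA (up t d) ↔ CB t := by
  constructor
  · intro h i hi
    rcases i with _ | i
    · simp at hi
    · rw [← count_up t d i]
      apply h
      have := hi.add_one
      exact this
  · intro h i hi
    rcases i with _ | _ | i
    · rw [count_zero _ (up_pos t d)]; simp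
    · simp at hi
    · rw [count_up]
      apply h
      rw [Nat.even_add_one] at hi
      simpa using hi

lemma CB_up (t : Multiset ℕ) (ht : ∀ i ∈ t, 0 < i) (d : ℕ) :
    CB (up t d) ↔ (Even d ∧ CA t) := by
  constructor
  · intro h
    refine ⟨?_, ?_⟩
    · have := h 1 (by simp)
      rwa [count_up_one t ht] at this
    intro i hi
    rcases i with _ | i
    · rw [count_zero t ht]; simp
    · rw [← count_up t d i]
      apply h
      exact hi.add_one
  · rintro ⟨hd, h⟩ i hi
    rcases i with _ | _ | i
    · simp at hi
    · rwa [count_up_one t ht]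
    · rw [count_up]
      apply h
      rw [Nat.odd_add_one] at hi
      simpa using hi

open Classical in
/-- orthogonal weight -/
noncomputable def WA (q Q : ℝ) (N : ℕ) (s : Multiset ℕ) : ℝ :=
  if CA s then
    1 / (q ^ (((∑ i ∈ range N, (cl s (i+1) : ℝ) ^ 2) - (od s : ℝ)) / 2)
      * ∏ i ∈ range N, P Q (s.count (i+1) / 2)) else 0

open Classical in
/-- symplectic weight -/
noncomputable def WB (q Q : ℝ) (N : ℕ) (s : Multiset ℕ) : ℝ :=
  if CB s then
    1 / (q ^ (((∑ i ∈ range N, (cl s (i+1) : ℝ) ^ 2) + (od s : ℝ)) / 2)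
      * ∏ i ∈ range N, P Q (s.count (i+1) / 2)) else 0

lemma WA_up (q Q : ℝ) (hq : 0 < q) (N : ℕ) (t : Multiset ℕ) (ht : ∀ i ∈ t, 0 < i) (d k : ℕ)
    (hk : t.card + d = k) :
    WA q Q (N+1) (up t d) = 1 / q ^ (((k:ℝ)^2 - k)/2) * (WB q Q N t / P Q (d/2)) := by
  unfold WA WB
  by_cases h : CB t
  · rw [if_pos h, if_pos ((CA_up t ht d).2 h), Finset.sum_range_succ', Finset.prod_range_succ']
    simp only [zero_add, add_assoc, Nat.reduceAdd, count_up_one t ht, cl_up_one, count_up, cl_up]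
    have h1 := od_up t d
    rw [hk] at *
    have h2 : (od (up t d) : ℝ) = k - od t := by
      rw [← h1]; push_cast; ring
    rw [h2]
    rw [show ((∑ x ∈ range N, (cl t (x + 1) : ℝ) ^ 2) + (k:ℝ) ^ 2 - (k - od t)) / 2
      = ((k:ℝ)^2 - k)/2 + ((∑ x ∈ range N, (cl t (x + 1) : ℝ) ^ 2) + od t) / 2 by ring,
      Real.rpow_add hq]
    simp only [one_div, mul_inv, div_eq_mul_inv]
    ring
  · rw [if_neg h, if_neg (fun h' => h ((CA_up t ht d).1 h'))]; simp

lemma WB_up (q Q : ℝ) (hq : 0 < q) (N : ℕ) (t : Multiset ℕ) (ht : ∀ i ∈ t, 0 < i) (d k : ℕ)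
    (hk : t.card + d = k) :
    WB q Q (N+1) (up t d) =
      1 / q ^ (((k:ℝ)^2 + k)/2) * (if Even d then WA q Q N t / P Q (d/2) else 0) := by
  unfold WA WB
  by_cases hd : Even d
  swap
  · rw [if_neg hd, if_neg (fun h' => hd ((CB_up t ht d).1 h').1)]; simp
  rw [if_pos hd]
  by_cases h : CA t
  · rw [if_pos h, if_pos ((CB_up t ht d).2 ⟨hd, h⟩), Finset.sum_range_succ', Finset.prod_range_succ']
    simp only [zero_add, add_assoc, Nat.reduceAdd, count_up_one t ht, cl_up_one, count_up, cl_up]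
    have h1 := od_up t d
    rw [hk] at *
    have h2 : (od (up t d) : ℝ) = k - od t := by
      rw [← h1]; push_cast; ring
    rw [h2]
    rw [show ((∑ x ∈ range N, (cl t (x + 1) : ℝ) ^ 2) + ((k:ℝ) ^ 2 + (k - od t))) / 2
      = ((k:ℝ)^2 + k)/2 + ((∑ x ∈ range N, (cl t (x + 1) : ℝ) ^ 2) - od t) / 2 by ring,
      Real.rpow_add hq]
    simp only [one_div, mul_inv, div_eq_mul_inv]
    ring
  · rw [if_neg h, if_neg (fun h' => h ((CB_up t ht d).1 h').2)]; simp

/-- orthogonal sum -/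
noncomputable def SA (q Q : ℝ) (N n k : ℕ) : ℝ := ∑ s ∈ Pt n k, WA q Q N s

/-- symplectic sum -/
noncomputable def SB (q Q : ℝ) (N n k : ℕ) : ℝ := ∑ s ∈ Pt n k, WB q Q N s

lemma SA_rec (q Q : ℝ) (hq : 0 < q) (N n k : ℕ) (hk : k ≤ n) :
    SA q Q (N+1) n k = 1 / q ^ (((k:ℝ)^2 - k)/2) *
      ∑ j ∈ range (k+1), SB q Q N (n-k) j / P Q ((k-j)/2) := by
  unfold SA SB
  rw [sum_Pt hk, Finset.mul_sum]
  apply Finset.sum_congr rfl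
  intro j hj
  have hj := Finset.mem_range.1 hj
  rw [Finset.sum_div, Finset.mul_sum]
  apply Finset.sum_congr rfl
  intro t ht
  obtain ⟨h1, h2, h3⟩ := mem_Pt.1 ht
  exact WA_up q Q hq N t h1 (k-j) k (by omega)

lemma SB_rec (q Q : ℝ) (hq : 0 < q) (N n k : ℕ) (hk : k ≤ n) :
    SB q Q (N+1) n k = 1 / q ^ (((k:ℝ)^2 + k)/2) *
      ∑ j ∈ range (k+1), if Even (k-j) then SA q Q N (n-k) j / P Q ((k-j)/2) else 0 := by
  unfold SA SB
  rw [sum_Pt hk, Finset.mul_sum]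
  apply Finset.sum_congr rfl
  intro j hj
  have hj := Finset.mem_range.1 hj
  rw [Finset.sum_div]
  have : ∀ t ∈ Pt (n-k) j, WB q Q (N+1) (up t (k-j)) = 1 / q ^ (((k:ℝ)^2 + k)/2) *
      (if Even (k-j) then WA q Q N t / P Q ((k-j)/2) else 0) := by
    intro t ht
    obtain ⟨h1, h2, h3⟩ := mem_Pt.1 ht
    exact WB_up q Q hq N t h1 (k-j) k (by omega)
  rw [Finset.sum_congr rfl this, ← Finset.mul_sum]
  congr 1
  split_ifs <;> simp

lemma SA_empty (q Q : ℝ) (N n k : ℕ) (h : n < k) : SA q Q N n k = 0 := by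
  simp [SA, Pt_empty h]

lemma SB_empty (q Q : ℝ) (N n k : ℕ) (h : n < k) : SB q Q N n k = 0 := by
  simp [SB, Pt_empty h]

lemma Pt_zero : Pt 0 0 = {0} := by
  ext s
  simp only [mem_Pt, Finset.mem_singleton, Multiset.card_eq_zero]
  constructor
  · exact fun h => h.2.2
  · rintro rfl; simp

lemma SA_zero (q Q : ℝ) : SA q Q 0 0 0 = 1 := by
  simp [SA, Pt_zero, WA, CA, od]

lemma SB_zero (q Q : ℝ) : SB q Q 0 0 0 = 1 := by
  simp [SB, Pt_zero, WB, CB, od]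

lemma S_par (q Q : ℝ) (hq : 0 < q) (N : ℕ) : (∀ n k, n ≤ N → Odd (n+k) → SA q Q N n k = 0) ∧
    (∀ n k, n ≤ N → Odd n → SB q Q N n k = 0) := by
  induction N with
  | zero =>
    refine ⟨fun n k hn h => ?_, fun n k hn h => ?_⟩
    · obtain rfl : n = 0 := by omega
      apply SA_empty
      rw [zero_add] at h
      exact h.pos
    · obtain rfl : n = 0 := by omega
      simp at h
  | succ N ih =>
    refine ⟨fun n k hn h => ?_, fun n k hn h => ?_⟩
    · rcases Nat.lt_or_ge n k with hk | hk
      · exact SA_empty _ _ _ _ _ hk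
      · rw [SA_rec q Q hq N n k hk, Finset.sum_eq_zero, mul_zero]
        intro j hj
        rcases Nat.eq_zero_or_pos k with rfl | hk0
        · obtain rfl : j = 0 := by simpa using hj
          rcases Nat.lt_or_ge N n with hN | hN
          · have : Pt n 0 = ∅ := by
              ext s
              simp only [mem_Pt, notMem_empty, iff_false, Multiset.card_eq_zero]
              rintro ⟨_, h2, rfl⟩
              simp at h2; omega
            simp [SB, this]
          · rw [ih.2 _ _ (by omega) (by simpa using h)]; simp
        · rw [ih.2 _ _ (by omega) (by rw [Nat.odd_iff] at *; omega)]; simp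
    · rcases Nat.lt_or_ge n k with hk | hk
      · exact SB_empty _ _ _ _ _ hk
      · rw [SB_rec q Q hq N n k hk, Finset.sum_eq_zero, mul_zero]
        intro j hj
        split_ifs with hd
        swap
        · rfl
        rcases Nat.eq_zero_or_pos k with rfl | hk0
        · obtain rfl : j = 0 := by simpa using hj
          rcases Nat.lt_or_ge N n with hN | hN
          · have : Pt n 0 = ∅ := by
              ext s
              simp only [mem_Pt, notMem_empty, iff_false, Multiset.card_eq_zero]
              rintro ⟨_, h2, rfl⟩
              simp at h2; omega
            simp [SA, this]
          · rw [ih.1 _ _ (by omega) (by simpa using h)]; simp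
        · have := Finset.mem_range.1 hj
          rw [ih.1 _ _ (by omega) (by rw [Nat.odd_iff, Nat.even_iff] at *; omega)]; simp

/-- `gb (m-1) (a-1)` with conventions. -/
noncomputable def g (Q : ℝ) : ℕ → ℕ → ℝ
  | 0, 0 => 1
  | 0, _ + 1 => 0
  | _ + 1, 0 => 0
  | n + 1, c + 1 => gb Q n c

/-- `gb (m-1) a` with conventions. -/
noncomputable def h (Q : ℝ) : ℕ → ℕ → ℝ
  | 0, _ => 0
  | n + 1, c => gb Q n c

lemma g_add_h (Q : ℝ) (m b : ℕ) : g Q m b + Q ^ b * h Q m b = gb Q m b := by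
  rcases m with _ | m <;> rcases b with _ | b <;> simp [g, h, gb_zero, gb_succ, gb]

lemma h_eq_g (Q : ℝ) (m b : ℕ) : h Q m b = g Q m (b+1) := by
  rcases m with _ | m <;> simp [g, h]

lemma g_gt (Q : ℝ) (m b : ℕ) (hb : m < b) : g Q m b = 0 := by
  rcases m with _ | m <;> rcases b with _ | b
  · omega
  · simp [g]
  · omega
  · simp only [g]; exact gb_gt _ _ _ (by omega)

lemma sum_pair (f : ℕ → ℝ) (a : ℕ) :
    ∑ j ∈ range (2*a), f j = ∑ b ∈ range a, (f (2*b) + f (2*b+1)) := by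
  induction a with
  | zero => simp
  | succ a ih =>
    rw [show 2*(a+1) = 2*a+1+1 by ring, sum_range_succ, sum_range_succ, ih, sum_range_succ]; ring

lemma sum_pair' (f : ℕ → ℝ) (a : ℕ) :
    ∑ j ∈ range (2*a+1), f j = (∑ b ∈ range a, (f (2*b+1) + f (2*b+2))) + f 0 := by
  induction a with
  | zero => simp
  | succ a ih =>
    rw [show 2*(a+1)+1 = 2*a+1+1+1 by ring, sum_range_succ, sum_range_succ, ih, sum_range_succ]; ring

/-- first summation -/
lemma vander0 {Q : ℝ} (h0 : 0 < Q) (h1 : Q < 1) (n a : ℕ) :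
    ∑ b ∈ range (a+1), Q ^ (b*b) * gb Q n b / P Q b / P Q (a-b) = gb Q (n+a) a / P Q a := by
  have := vander_s1 h0 h1 n a 0
  simp only [add_zero] at this
  rw [← this]
  apply Finset.sum_congr rfl
  intro b _
  rw [div_div]

/-- second summation -/
lemma vander1 {Q : ℝ} (h0 : 0 < Q) (h1 : Q < 1) (n a : ℕ) :
    ∑ b ∈ range (a+1), Q ^ (b*(b-1)) * g Q n b / P Q b / P Q (a-b) = g Q (n+a) a / P Q a := by
  rcases n with _ | n
  · rw [Finset.sum_range_succ', Finset.sum_eq_zero]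
    · rcases a with _ | a <;> simp [g, P_zero, gb_self]
    · intro i _; simp [g]
  · rcases a with _ | a
    · simp [g]
    · have := vander_s1 h0 h1 n a 1
      rw [Finset.sum_range_succ']
      rw [show n + 1 + (a+1) = (n + a + 1) + 1 by ring]
      simp only [g]
      rw [← this]
      simp only [mul_zero, zero_div, add_zero]
      apply Finset.sum_congr rfl
      intro b _
      rw [div_div, show a + 1 - (b+1) = a - b by omega, show b + 1 - 1 = b by omega, mul_comm b]

lemma dist_aux (X Y Z S T S' T' : ℝ) (h1 : X * S = Y * (Z * S')) (h2 : X * T = Y * (Z * T')) :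
    X * (S + T) = Y * (Z * (S' + T')) := by
  linear_combination h1 + h2

lemma rpow_aux {q : ℝ} (hq : 0 < q) (x : ℝ) (n : ℕ) (hx : x = n) : 1 / q ^ x = (q⁻¹) ^ n := by
  rw [hx, Real.rpow_natCast]; simp

lemma closed {q : ℝ} (hq : 1 < q) (u Q : ℝ) (hu : u = q⁻¹) (hQ : Q = u^2) (N : ℕ) :
    (∀ m a, 2*m+1 ≤ N → SA q Q N (2*m+1) (2*a+1) = u^m * (Q^(a*a) * gb Q m a / P Q a)) ∧
    (∀ m a, 2*m ≤ N → SA q Q N (2*m) (2*a) = u^m * (Q^(a*(a-1)) * g Q m a / P Q a)) ∧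
    (∀ m a, 2*m ≤ N → SB q Q N (2*m) (2*a) = u^m * (Q^(a*a) * g Q m a / P Q a)) ∧
    (∀ m a, 2*m ≤ N → SB q Q N (2*m) (2*a+1) = u^m * (Q^(a*(a+1)) * h Q m a / P Q a)) := by
  have hq0 : 0 < q := by linarith
  have hu0 : 0 < u := by rw [hu]; positivity
  have hu1 : u < 1 := by rw [hu]; exact inv_lt_one_of_one_lt₀ hq
  have h0 : 0 < Q := by rw [hQ]; positivity
  have h1 : Q < 1 := by rw [hQ]; exact pow_lt_one₀ hu0.le hu1 (by norm_num)
  induction N with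
  | zero =>
    refine ⟨?_, ?_, ?_, ?_⟩
    · intro m a hm; omega
    · intro m a hm
      obtain rfl : m = 0 := by omega
      rcases a with _ | a
      · simp [SA_zero, g, P_zero]
      · rw [SA_empty _ _ _ _ _ (by omega)]; simp [g]
    · intro m a hm
      obtain rfl : m = 0 := by omega
      rcases a with _ | a
      · simp [SB_zero, g, P_zero]
      · rw [SB_empty _ _ _ _ _ (by omega)]; simp [g]
    · intro m a hm
      obtain rfl : m = 0 := by omega
      rw [SB_empty _ _ _ _ _ (by omega)]; simp [h]
  | succ N ih =>
    obtain ⟨ih1, ih2, ih3, ih4⟩ := ih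
    have hempty : ∀ m, Pt (2*m+2) 0 = ∅ := by
      intro m
      ext s
      simp only [mem_Pt, notMem_empty, iff_false, Multiset.card_eq_zero]
      rintro ⟨_, h2, rfl⟩
      simp at h2
    refine ⟨?_, ?_, ?_, ?_⟩
    · intro m a hm
      rcases Nat.lt_or_ge m a with ha | ha
      · rw [SA_empty _ _ _ _ _ (by omega), gb_gt _ _ _ ha]; simp
      · obtain ⟨n, rfl⟩ := Nat.exists_eq_add_of_le' ha
        rw [SA_rec q Q hq0 N _ _ (by omega)]
        rw [rpow_aux hq0 _ (a*(2*a+1)) (by push_cast; ring), ← hu]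
        rw [show 2*a+1+1 = 2*(a+1) by ring, sum_pair]
        rw [show 2*(n+a)+1-(2*a+1) = 2*n by omega]
        rw [mul_div_assoc, ← vander0 h0 h1 n a, Finset.mul_sum, Finset.mul_sum, Finset.mul_sum]
        apply Finset.sum_congr rfl
        intro b hb
        have hb := Finset.mem_range.1 hb
        rw [ih3 _ _ (by omega), ih4 _ _ (by omega)]
        rw [show (2*a+1-2*b)/2 = a - b by omega, show (2*a+1-(2*b+1))/2 = a - b by omega]
        rw [← g_add_h Q n b, hQ]
        ring
    · intro m a hm
      rcases Nat.lt_or_ge m a with ha | ha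
      · rw [SA_empty _ _ _ _ _ (by omega), g_gt _ _ _ ha]; simp
      · obtain ⟨n, rfl⟩ := Nat.exists_eq_add_of_le' ha
        rcases a with _ | a
        · rcases n with _ | n
          · rw [SA_rec q Q hq0 N _ _ (by omega)]
            have := ih3 0 0 (by omega)
            simp [P_zero, g] at this
            simp [g, P_zero, this]
          · simp [g, SA, hempty, mul_add]
        rw [SA_rec q Q hq0 N _ _ (by omega)]
        rw [rpow_aux hq0 _ ((a+1)*(2*a+1)) (by push_cast; ring), ← hu]
        rw [sum_pair']
        rw [show 2*(n+(a+1))-(2*(a+1)) = 2*n by omega]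
        have hv := vander1 h0 h1 n (a+1)
        rw [Finset.sum_range_succ'] at hv
        rw [mul_div_assoc, ← hv]
        rw [show (a+1)*(a+1-1) = (a+1)*a by rw [Nat.add_sub_cancel]]
        have e0 := ih3 n 0 (by omega)
        rw [mul_zero] at e0
        rw [e0]
        apply dist_aux
        · simp only [Finset.mul_sum]
          apply Finset.sum_congr rfl
          intro b hb
          have hb := Finset.mem_range.1 hb
          have e1 := ih3 n (b+1) (by omega)
          rw [show 2*(b+1) = 2*b+2 by ring] at e1
          rw [e1, ih4 _ _ (by omega), h_eq_g]
          rw [show (2*(a+1)-(2*b+1))/2 = a - b by omega,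
            show (2*(a+1)-(2*b+2))/2 = a - b by omega,
            show a+1-(b+1) = a-b by omega, show b+1-1 = b by omega]
          have hP := P_ne h0 h1 b
          have hP1 := P_ne h0 h1 (a-b)
          have hP2 := one_sub_ne h0 h1 b
          rw [P_succ]
          field_simp
          rw [hQ]
          ring
        · rw [show (2*(a+1)-0)/2 = a + 1 by omega, hQ]
          simp only [Nat.sub_zero, mul_zero, zero_mul]
          ring
    · intro m a hm
      rcases Nat.lt_or_ge m a with ha | ha
      · rw [SB_empty _ _ _ _ _ (by omega), g_gt _ _ _ ha]; simp
      · obtain ⟨n, rfl⟩ := Nat.exists_eq_add_of_le' ha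
        rcases a with _ | a
        · rcases n with _ | n
          · rw [SB_rec q Q hq0 N _ _ (by omega)]
            have := ih2 0 0 (by omega)
            simp [P_zero, g] at this
            simp [g, P_zero, this]
          · simp [g, SB, hempty, mul_add]
        rw [SB_rec q Q hq0 N _ _ (by omega)]
        rw [rpow_aux hq0 _ ((a+1)*(2*a+3)) (by push_cast; ring), ← hu]
        rw [Finset.sum_range_succ, sum_pair]
        rw [show 2*(n+(a+1))-(2*(a+1)) = 2*n by omega]
        have hv := vander1 h0 h1 n (a+1)
        rw [Finset.sum_range_succ] at hv
        rw [mul_div_assoc, ← hv]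
        have e0 := ih2 n (a+1) (by omega)
        rw [e0]
        apply dist_aux
        · simp only [Finset.mul_sum]
          apply Finset.sum_congr rfl
          intro b hb
          have hb := Finset.mem_range.1 hb
          rw [if_pos (by rw [Nat.even_iff]; omega), if_neg (by rw [Nat.even_iff]; omega)]
          rw [ih2 _ _ (by omega)]
          rw [show (2*(a+1)-2*b)/2 = a + 1 - b by omega, hQ]
          ring
        · rw [if_pos (by rw [Nat.even_iff]; omega)]
          rw [show (2*(a+1)-2*(a+1))/2 = a+1-(a+1) by omega, hQ]
          ring
    · intro m a hm
      rcases Nat.lt_or_ge a m with ha | ha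
      swap
      · rw [SB_empty _ _ _ _ _ (by omega), h_eq_g, g_gt _ _ _ (by omega)]; simp
      · obtain ⟨n, rfl⟩ := Nat.exists_eq_add_of_lt ha
        rw [SB_rec q Q hq0 N _ _ (by omega)]
        rw [rpow_aux hq0 _ ((2*a+1)*(a+1)) (by push_cast; ring), ← hu]
        rw [show 2*a+1+1 = 2*(a+1) by ring, sum_pair]
        rw [show 2*(a+n+1)-(2*a+1) = 2*n+1 by omega]
        simp only [h]
        rw [add_comm a n, mul_div_assoc, ← vander0 h0 h1 n a]
        simp only [Finset.mul_sum]
        apply Finset.sum_congr rfl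
        intro b hb
        have hb := Finset.mem_range.1 hb
        rw [if_neg (by rw [Nat.even_iff]; omega), if_pos (by rw [Nat.even_iff]; omega)]
        rw [ih1 _ _ (by omega)]
        rw [show (2*a+1-(2*b+1))/2 = a - b by omega, hQ]
        ring

end Anz

open Classical in
/-- Anzanello's second conjecture. -/
theorem anzanello_second_conjecture (q : ℝ) (hq : 1 < q) (m : ℕ) (hm : 1 ≤ m) :
    (∑ lam : Nat.Partition (2 * m + 1),
      if ∀ i, Even i → Even (lam.parts.count i) then
        (1 - q ^ (-(colLen lam 1 : ℝ))) /
          (q ^ ((((∑ i ∈ Finset.Icc 1 (2 * m + 1), ((colLen lam i : ℝ)) ^ 2))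
                - (numOddParts lam : ℝ)) / 2)
            * ∏ i ∈ Finset.Icc 1 (2 * m + 1),
                qPoch (q ^ (-2 : ℤ)) (q ^ (-2 : ℤ)) (lam.parts.count i / 2))
      else 0)
    = 1 / (q ^ m * qPoch (q ^ (-2 : ℤ)) (q ^ (-2 : ℤ)) m)
      + 1 / q ^ (m + 1) * ∑ i ∈ Finset.range (m + 1),
          (-1 : ℝ) ^ ((i : ℤ) - 1)
            / (q ^ (i * (i + 1)) * qPoch (q ^ (-2 : ℤ)) (q ^ (-2 : ℤ)) (m - i)) := by
  have hq0 : 0 < q := by linarith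
  obtain ⟨u, hu⟩ : ∃ u, u = q⁻¹ := ⟨_, rfl⟩
  obtain ⟨Q, hQq⟩ : ∃ Q, Q = q ^ (-2 : ℤ) := ⟨_, rfl⟩
  have hQ : Q = u ^ 2 := by
    rw [hQq, hu, zpow_neg, inv_pow]; norm_cast
  have hu0 : 0 < u := by rw [hu]; positivity
  have hu1 : u < 1 := by rw [hu]; exact inv_lt_one_of_one_lt₀ hq
  have h0 : 0 < Q := by rw [hQ]; positivity
  have h1 : Q < 1 := by rw [hQ]; exact pow_lt_one₀ hu0.le hu1 (by norm_num)
  rw [← hQq]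
  have hcl := (Anz.closed hq u Q hu hQ (2*m+1)).1
  have hpar := (Anz.S_par q Q hq0 (2*m+1)).1
  have hL : ∀ lam : Nat.Partition (2*m+1),
      (if ∀ i, Even i → Even (lam.parts.count i) then
        (1 - q ^ (-(colLen lam 1 : ℝ))) /
          (q ^ ((((∑ i ∈ Finset.Icc 1 (2 * m + 1), ((colLen lam i : ℝ)) ^ 2))
                - (numOddParts lam : ℝ)) / 2)
            * ∏ i ∈ Finset.Icc 1 (2 * m + 1), qPoch Q Q (lam.parts.count i / 2))
      else 0) = (fun s : Multiset ℕ => (1 - u ^ s.card) * Anz.WA q Q (2*m+1) s) lam.parts := by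
    intro lam
    have hc1 : colLen lam 1 = lam.parts.card := by
      unfold colLen
      rw [Multiset.filter_eq_self.2]
      intro i hi
      exact lam.parts_pos hi
    have hI : Finset.Icc 1 (2*m+1) = (Finset.range (2*m+1)).map (addRightEmbedding 1) := by
      rw [Finset.range_eq_Ico, Finset.map_add_right_Ico]; rfl
    have hrp : q ^ (-(lam.parts.card : ℝ)) = u ^ lam.parts.card := by
      rw [Real.rpow_neg hq0.le, Real.rpow_natCast, hu, inv_pow]
    rw [hc1, hrp, hI, Finset.sum_map, Finset.prod_map]
    simp only [addRightEmbedding_apply]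
    unfold Anz.WA
    by_cases hC : Anz.CA lam.parts
    · have hC' : ∀ i, Even i → Even (lam.parts.count i) := hC
      rw [if_pos hC, if_pos hC', mul_one_div]; rfl
    · have hC' : ¬ ∀ i, Even i → Even (lam.parts.count i) := hC
      rw [if_neg hC, if_neg hC', mul_zero]
  rw [Finset.sum_congr rfl (fun lam _ => hL lam),
    Anz.sum_partition (2*m+1) (fun s => (1 - u ^ s.card) * Anz.WA q Q (2*m+1) s)]
  have hS : ∀ k ∈ Finset.range (2*m+1+1),
      ∑ s ∈ Anz.Pt (2*m+1) k, (1 - u ^ s.card) * Anz.WA q Q (2*m+1) s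
      = (1 - u ^ k) * Anz.SA q Q (2*m+1) (2*m+1) k := by
    intro k _
    unfold Anz.SA
    rw [Finset.mul_sum]
    apply Finset.sum_congr rfl
    intro s hs
    rw [(Anz.mem_Pt.1 hs).2.2]
  rw [Finset.sum_congr rfl hS, show 2*m+1+1 = 2*(m+1) by ring, Anz.sum_pair]
  have hT : ∀ a ∈ Finset.range (m+1),
      (1 - u ^ (2*a)) * Anz.SA q Q (2*m+1) (2*m+1) (2*a)
        + (1 - u ^ (2*a+1)) * Anz.SA q Q (2*m+1) (2*m+1) (2*a+1)
      = u ^ m * (Q ^ (a*(a+0)) * Anz.gb Q m a / Anz.P Q (a+0))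
        - u ^ (m+1) * (Q ^ (a*(a+1)) * Anz.gb Q m a / Anz.P Q a) := by
    intro a _
    rw [hpar _ _ le_rfl (by rw [Nat.odd_iff]; omega), hcl _ _ le_rfl, add_zero]
    have : u ^ (2*a+1) = Q ^ a * u := by rw [hQ]; ring
    rw [this]
    ring
  rw [Finset.sum_congr rfl hT, Finset.sum_sub_distrib, ← Finset.mul_sum, ← Finset.mul_sum,
    Anz.sumJ h0 h1 m 0 m le_rfl, Anz.sumH h0 h1 m m le_rfl, add_zero, sub_eq_add_neg]
  congr 1
  · rw [hu, inv_pow]; simp [Anz.P, mul_comm]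
  · rw [hu, inv_pow, one_div, ← mul_neg]
    congr 1
    unfold Anz.R
    rw [← Finset.sum_neg_distrib]
    apply Finset.sum_congr rfl
    intro i _
    have e1 : (-1 : ℝ) ^ ((i : ℤ) - 1) = - (-1) ^ i := by
      rw [zpow_sub₀ (by norm_num), zpow_natCast, zpow_one, div_neg, div_one]
    have e2 : Q ^ (i*(i+1)/2) = (q ^ (i*(i+1)))⁻¹ := by
      rw [hQ, ← pow_mul, Nat.mul_div_cancel' (Nat.even_mul_succ_self i).two_dvd, hu, inv_pow]
    rw [e1, e2]
    simp only [div_eq_mul_inv, mul_inv]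
    ring
end

section
/- Let q be a real number with q > 1 and let m ≥ 1 be an integer. Then the sum, over all integer partitions λ of 2m in which every even part occurs with even multiplicity, of (1 - q^{-λ'_1}) / ( q^{( Σ_i (λ'_i)^2 - o(λ) )/2} · Π_i (1/q^2; 1/q^2)_{⌊m_i(λ)/2⌋} ) equals (1/q^m) · Σ_{i=1}^{m} (-1)^{i-1} / ( q^{i(i-1)} (1/q^2; 1/q^2)_{m-i} ). -/
/-! ### Gaussian binomial coefficients -/

noncomputable def gb (Q : ℝ) : ℕ → ℕ → ℝ
  | _, 0 => 1
  | 0, _ + 1 => 0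
  | n + 1, k + 1 => gb Q n k + Q ^ (k + 1) * gb Q n (k + 1)

/-- `[m-1, k-1]` with the right conventions at zero. -/
noncomputable def gG (Q : ℝ) : ℕ → ℕ → ℝ
  | 0, 0 => 1
  | 0, _ + 1 => 0
  | _ + 1, 0 => 0
  | m + 1, k + 1 => gb Q m k

/-- `[m-1, k]` with the right conventions at zero. -/
noncomputable def gH (Q : ℝ) : ℕ → ℕ → ℝ
  | 0, _ => 0
  | m + 1, k => gb Q m k

theorem gb_zero_right (Q : ℝ) (n : ℕ) : gb Q n 0 = 1 := by cases n <;> rfl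
theorem gb_succ (Q : ℝ) (n k : ℕ) :
    gb Q (n + 1) (k + 1) = gb Q n k + Q ^ (k + 1) * gb Q n (k + 1) := rfl

theorem gb_lt (Q : ℝ) (n : ℕ) : ∀ k, n < k → gb Q n k = 0 := by
  induction n with
  | zero => intro k hk; obtain ⟨k, rfl⟩ := Nat.exists_eq_succ_of_ne_zero (by omega : k ≠ 0); rfl
  | succ n ih =>
    intro k hk
    obtain ⟨k, rfl⟩ := Nat.exists_eq_succ_of_ne_zero (by omega : k ≠ 0)
    rw [Nat.succ_eq_add_one, gb_succ, ih k (by omega), ih (k + 1) (by omega)]; simp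

theorem gG_add_gH (Q : ℝ) (m j : ℕ) : gG Q m j + Q ^ j * gH Q m j = gb Q m j := by
  cases m <;> cases j <;> simp [gG, gH, gb, gb_zero_right]

theorem qP_succ (Q : ℝ) (n : ℕ) : qPoch Q Q (n + 1) = qPoch Q Q n * (1 - Q ^ (n + 1)) := by
  unfold qPoch; rw [Finset.prod_range_succ]; ring

theorem qP_zero (Q : ℝ) : qPoch Q Q 0 = 1 := by simp [qPoch]

theorem qP_ne {Q : ℝ} (h0 : 0 < Q) (h1 : Q < 1) (n : ℕ) : qPoch Q Q n ≠ 0 := by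
  induction n with
  | zero => simp [qP_zero]
  | succ n ih =>
    rw [qP_succ]
    have : Q ^ (n + 1) < 1 := pow_lt_one₀ h0.le h1 (by omega)
    exact mul_ne_zero ih (by linarith)

theorem gb_formula (Q : ℝ) (n : ℕ) : ∀ k l, k + l = n →
    gb Q n k * (qPoch Q Q k * qPoch Q Q l) = qPoch Q Q n := by
  induction n with
  | zero =>
    intro k l h
    obtain rfl : k = 0 := by omega
    obtain rfl : l = 0 := by omega
    simp [qP_zero, gb]
  | succ n ih =>
    intro k l h
    rcases k with _ | k
    · obtain rfl : l = n + 1 := by omega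
      simp [gb_zero_right, qP_zero]
    · rcases l with _ | l
      · obtain rfl : k = n := by omega
        have := ih k 0 (by omega)
        rw [gb_succ, gb_lt Q k (k + 1) (by omega), qP_zero] at *
        rw [qP_succ]; linear_combination (1 - Q ^ (k + 1)) * this
      · have h1 := ih k (l + 1) (by omega)
        have h2 := ih (k + 1) l (by omega)
        obtain rfl : n = k + l + 1 := by omega
        rw [gb_succ, qP_succ Q (k + l + 1)]
        rw [qP_succ Q k] at *
        rw [qP_succ Q l] at *
        linear_combination (1 - Q ^ (k + 1)) * h1 + Q ^ (k + 1) * (1 - Q ^ (l + 1)) * h2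

section
variable {Q : ℝ} (h0 : 0 < Q) (h1 : Q < 1)

theorem gb_eq {Q : ℝ} (h0 : 0 < Q) (h1 : Q < 1) (k l : ℕ) :
    gb Q (k + l) k = qPoch Q Q (k + l) / (qPoch Q Q k * qPoch Q Q l) := by
  rw [eq_div_iff (mul_ne_zero (qP_ne h0 h1 _) (qP_ne h0 h1 _))]
  exact gb_formula Q _ _ _ rfl

theorem gb_eq' {Q : ℝ} (h0 : 0 < Q) (h1 : Q < 1) {j k : ℕ} (h : j ≤ k) :
    gb Q k j = qPoch Q Q k / (qPoch Q Q j * qPoch Q Q (k - j)) := by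
  obtain ⟨l, rfl⟩ := Nat.exists_eq_add_of_le h
  rw [gb_eq h0 h1]; simp

theorem gb_symm {Q : ℝ} (h0 : 0 < Q) (h1 : Q < 1) (k l : ℕ) :
    gb Q (k + l) k = gb Q (k + l) l := by
  rw [gb_eq h0 h1, add_comm k l, gb_eq h0 h1, mul_comm]

theorem gb_self (Q : ℝ) (k : ℕ) : gb Q k k = 1 := by
  induction k with
  | zero => rfl
  | succ n ih => rw [gb_succ, ih, gb_lt Q n (n+1) (by omega)]; simp

theorem gb_pascal2 {Q : ℝ} (h0 : 0 < Q) (h1 : Q < 1) (j l : ℕ) :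
    gb Q (j + l + 1) (j + 1) = Q ^ l * gb Q (j + l) j + gb Q (j + l) (j + 1) := by
  rcases l with _ | l
  · simp [gb_self, gb_lt Q j (j+1) (by omega)]
  · have e1 := gb_eq h0 h1 (j + 1) (l + 1)
    have e2 := gb_eq h0 h1 j (l + 1)
    have e3 := gb_eq h0 h1 (j + 1) l
    rw [show j + 1 + (l + 1) = j + (l + 1) + 1 by ring] at e1
    rw [show j + 1 + l = j + (l + 1) by ring] at e3
    rw [e1, e2, e3]
    have a1 := qP_ne h0 h1 (j + 1)
    have a2 := qP_ne h0 h1 (l + 1)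
    rw [qP_succ] at a1 a2
    rw [qP_succ Q (j + (l + 1)), qP_succ Q j, qP_succ Q l]
    obtain ⟨b1, b2⟩ := mul_ne_zero_iff.1 a1
    obtain ⟨b3, b4⟩ := mul_ne_zero_iff.1 a2
    field_simp
    ring

/-- Common summation step for the q-Vandermonde identities. -/
theorem vand_step {Q : ℝ} (h0 : 0 < Q) (h1 : Q < 1) (f : ℕ → ℝ) (M a R : ℕ) :
    ∑ j ∈ Finset.range (R + 1), Q ^ (j * (j + a)) * gb Q (M + 1) j * f (j + a)
    = ∑ j ∈ Finset.range (R + 1), Q ^ (j * (j + a)) * gb Q M j * f (j + a)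
      + Q ^ (M + 1 + a) * ∑ j ∈ Finset.range R, Q ^ (j * (j + (a + 1))) * gb Q M j * f (j + (a + 1)) := by
  rw [Finset.sum_range_succ', Finset.sum_range_succ', Finset.mul_sum]
  rw [add_right_comm, ← Finset.sum_add_distrib]
  simp only [gb_zero_right]
  congr 1
  apply Finset.sum_congr rfl
  intro j hj
  by_cases hjM : j ≤ M
  · obtain ⟨l, rfl⟩ := Nat.exists_eq_add_of_le hjM
    rw [gb_pascal2 h0 h1, show j + (a + 1) = j + 1 + a by ring]
    ring
  · rw [gb_lt Q (M + 1) _ (by omega), gb_lt Q M _ (by omega), gb_lt Q M _ (by omega)]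
    ring

theorem vand {Q : ℝ} (h0 : 0 < Q) (h1 : Q < 1) (N M : ℕ) : ∀ a R, M ≤ R →
    ∑ j ∈ Finset.range (R + 1), Q ^ (j * (j + a)) * gb Q M j * gb Q N (j + a) = gb Q (M + N) (M + a) := by
  induction M with
  | zero =>
    intro a R _
    rw [Finset.sum_range_succ']
    simp [gb_zero_right, gb_lt Q 0]
  | succ M ih =>
    intro a R hR
    rw [vand_step h0 h1, ih a R (by omega)]
    obtain ⟨R, rfl⟩ := Nat.exists_eq_add_of_le' (by omega : 1 ≤ R)
    rw [ih (a + 1) R (by omega)]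
    rw [show M + 1 + N = M + N + 1 by ring, show M + 1 + a = M + a + 1 by ring, gb_succ,
      show M + (a + 1) = M + a + 1 by ring]

theorem vandInf {Q : ℝ} (h0 : 0 < Q) (h1 : Q < 1) (M : ℕ) : ∀ a R, M ≤ R →
    ∑ j ∈ Finset.range (R + 1), Q ^ (j * (j + a)) * gb Q M j * (qPoch Q Q (j + a))⁻¹ =
      (qPoch Q Q (M + a))⁻¹ := by
  induction M with
  | zero =>
    intro a R _
    rw [Finset.sum_range_succ']
    simp [gb_zero_right, gb_lt Q 0]
  | succ M ih =>
    intro a R hR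
    rw [vand_step h0 h1 (fun j => (qPoch Q Q j)⁻¹), ih a R (by omega)]
    obtain ⟨R, rfl⟩ := Nat.exists_eq_add_of_le' (by omega : 1 ≤ R)
    rw [ih (a + 1) R (by omega)]
    rw [show M + 1 + a = M + a + 1 by ring,
      show M + (a + 1) = M + a + 1 by ring]
    have a1 := qP_ne h0 h1 (M + a + 1)
    rw [qP_succ] at *
    obtain ⟨b1, b2⟩ := mul_ne_zero_iff.1 a1
    field_simp
    ring

/-- The final identity. -/
theorem final_id {Q : ℝ} (h0 : 0 < Q) (h1 : Q < 1) (n : ℕ) :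
    ∑ k ∈ Finset.range (n + 1), Q ^ (k * (k + 1)) * gb Q n k * (qPoch Q Q k)⁻¹
    = ∑ i ∈ Finset.range (n + 1), (-1) ^ i * Q ^ (i * (i + 1) / 2) * (qPoch Q Q (n - i))⁻¹ := by
  induction n with
  | zero => simp [gb_zero_right]
  | succ n ih =>
    have hL : ∑ k ∈ Finset.range (n + 1 + 1), Q ^ (k * (k + 1)) * gb Q (n + 1) k * (qPoch Q Q k)⁻¹
        = (1 - Q ^ (n + 1)) * ∑ k ∈ Finset.range (n + 1), Q ^ (k * (k + 1)) * gb Q n k * (qPoch Q Q k)⁻¹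
        + Q ^ (n + 1) * (qPoch Q Q (n + 1))⁻¹ := by
      have hv := vandInf h0 h1 (n + 1) 0 (n + 1) le_rfl
      simp only [add_zero] at hv
      rw [← hv, Finset.mul_sum, Finset.mul_sum]
      rw [Finset.sum_range_succ _ (n + 1), Finset.sum_range_succ _ (n + 1), ← add_assoc,
        ← Finset.sum_add_distrib]
      congr 1
      · apply Finset.sum_congr rfl
        intro k hk
        have hk' : k ≤ n := by simpa [Nat.lt_succ_iff] using hk
        obtain ⟨l, rfl⟩ := Nat.exists_eq_add_of_le hk'
        have key : (1 - Q ^ (k + l + 1)) * gb Q (k + l) k = (1 - Q ^ (l + 1)) * gb Q (k + l + 1) k := by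
          have e1 := gb_eq h0 h1 k l
          have e2 := gb_eq h0 h1 k (l + 1)
          rw [show k + (l + 1) = k + l + 1 by ring] at e2
          rw [e1, e2]
          have a1 := qP_ne h0 h1 k
          have a2 := qP_ne h0 h1 (l + 1)
          rw [qP_succ] at a2
          rw [qP_succ Q (k + l), qP_succ Q l]
          obtain ⟨b3, b4⟩ := mul_ne_zero_iff.1 a2
          field_simp
        linear_combination -(Q ^ (k * (k + 1)) * (qPoch Q Q k)⁻¹) * key
      · ring
    rw [hL, ih]
    have hR : ∑ i ∈ Finset.range (n + 1 + 1), (-1) ^ i * Q ^ (i * (i + 1) / 2) * (qPoch Q Q (n + 1 - i))⁻¹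
        = ∑ i ∈ Finset.range (n + 1), (-1) ^ i * Q ^ (i * (i + 1) / 2) * (qPoch Q Q (n - i))⁻¹
        + Q ^ (n + 1) * ∑ i ∈ Finset.range (n + 1 + 1), (-1) ^ i * Q ^ (i * (i - 1) / 2) * (qPoch Q Q (n + 1 - i))⁻¹ := by
      rw [Finset.mul_sum, Finset.sum_range_succ _ (n + 1), Finset.sum_range_succ _ (n + 1), ← add_assoc,
        ← Finset.sum_add_distrib]
      have tri : ∀ i : ℕ, i * (i + 1) / 2 = i * (i - 1) / 2 + i := by
        intro i
        rcases i with _ | i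
        · rfl
        · have : (i + 1) * (i + 1 + 1) = (i + 1) * (i + 1 - 1) + (i + 1) * 2 := by
            simp; ring
          rw [this, Nat.add_mul_div_right _ _ (by norm_num)]
      congr 1
      · apply Finset.sum_congr rfl
        intro i hi
        have hi' : i ≤ n := by simpa [Nat.lt_succ_iff] using hi
        obtain ⟨l, rfl⟩ := Nat.exists_eq_add_of_le hi'
        rw [tri, show i + l + 1 - i = l + 1 by omega, show i + l - i = l by omega]
        have a2 := qP_ne h0 h1 (l + 1)
        rw [qP_succ] at *
        obtain ⟨b3, b4⟩ := mul_ne_zero_iff.1 a2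
        field_simp
        ring
      · rw [tri]; ring
    rw [hR, Finset.sum_range_succ' _ (n + 1)]
    have : ∀ i ∈ Finset.range (n + 1), (-1 : ℝ) ^ (i + 1) * Q ^ ((i + 1) * (i + 1 - 1) / 2) * (qPoch Q Q (n + 1 - (i + 1)))⁻¹
        = - ((-1) ^ i * Q ^ (i * (i + 1) / 2) * (qPoch Q Q (n - i))⁻¹) := by
      intro i _
      rw [show (i + 1) * (i + 1 - 1) = i * (i + 1) by simp; ring, show n + 1 - (i + 1) = n - i by omega]
      ring
    rw [Finset.sum_congr rfl this, Finset.sum_neg_distrib]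
    simp
    ring

/-- recursion identity (iv) -/
theorem rec_iv {Q : ℝ} (h0 : 0 < Q) (h1 : Q < 1) (m k : ℕ) :
    ∑ j ∈ Finset.range (k + 1), Q ^ (j * j) * gb Q m j * (qPoch Q Q j)⁻¹ * (qPoch Q Q (k - j))⁻¹
      = gb Q (m + k) k * (qPoch Q Q k)⁻¹ := by
  have hv := vand h0 h1 m k 0 k le_rfl
  simp only [add_zero] at hv
  rw [add_comm m k, ← hv, Finset.sum_mul]
  apply Finset.sum_congr rfl
  intro j hj
  have hj' : j ≤ k := by simpa [Nat.lt_succ_iff] using hj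
  rw [gb_eq' h0 h1 hj']
  have := qP_ne h0 h1 k
  field_simp

theorem rec_ii {Q : ℝ} (h0 : 0 < Q) (h1 : Q < 1) (m k : ℕ) :
    ∑ j ∈ Finset.range (k + 1), Q ^ (j * j) * gG Q m j * (qPoch Q Q j)⁻¹ * (qPoch Q Q (k - j))⁻¹
    + ∑ j ∈ Finset.range (k + 1), Q ^ (j * (j + 1)) * gH Q m j * (qPoch Q Q j)⁻¹ * (qPoch Q Q (k - j))⁻¹
      = gb Q (m + k) k * (qPoch Q Q k)⁻¹ := by
  rw [← rec_iv h0 h1, ← Finset.sum_add_distrib]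
  apply Finset.sum_congr rfl
  intro j _
  rw [← gG_add_gH]; ring

theorem rec_i {Q : ℝ} (h0 : 0 < Q) (h1 : Q < 1) (m k : ℕ) :
    ∑ j ∈ Finset.range (k + 1 + 1), Q ^ (j * j) * gG Q m j * (qPoch Q Q j)⁻¹ * (qPoch Q Q (k + 1 - j))⁻¹
    + ∑ j ∈ Finset.range (k + 1), Q ^ (j * (j + 1)) * gH Q m j * (qPoch Q Q j)⁻¹ * (qPoch Q Q (k - j))⁻¹
      = gG Q (m + (k + 1)) (k + 1) * (qPoch Q Q (k + 1))⁻¹ := by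
  have h2 := rec_ii h0 h1 m (k + 1)
  have h3 : ∑ j ∈ Finset.range (k + 1 + 1), Q ^ (j * j) * gH Q m j * (qPoch Q Q j)⁻¹ * (qPoch Q Q (k + 1 - j))⁻¹
      = gH Q (m + (k + 1)) (k + 1) * (qPoch Q Q (k + 1))⁻¹ := by
    rcases m with _ | m
    · have : gH Q (0 + (k + 1)) (k + 1) = 0 := by
        rw [zero_add]; exact gb_lt Q _ _ (by omega)
      rw [this]; simp [gH]
    · have := rec_iv h0 h1 m (k + 1)
      rw [show m + 1 + (k + 1) = m + (k + 1) + 1 by ring]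
      exact this
  have h4 : ∑ j ∈ Finset.range (k + 1), Q ^ (j * (j + 1)) * gH Q m j * (qPoch Q Q j)⁻¹ * (qPoch Q Q (k - j))⁻¹
      = ∑ j ∈ Finset.range (k + 1 + 1), Q ^ (j * (j + 1)) * gH Q m j * (qPoch Q Q j)⁻¹ * (qPoch Q Q (k + 1 - j))⁻¹
       - Q ^ (k + 1) * ∑ j ∈ Finset.range (k + 1 + 1), Q ^ (j * j) * gH Q m j * (qPoch Q Q j)⁻¹ * (qPoch Q Q (k + 1 - j))⁻¹ := by
    rw [Finset.mul_sum, ← Finset.sum_sub_distrib, Finset.sum_range_succ _ (k + 1)]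
    rw [show (k + 1) * (k + 1 + 1) = (k + 1) + (k + 1) * (k + 1) by ring, pow_add Q (k + 1) ((k + 1) * (k + 1))]
    rw [mul_assoc (Q ^ (k + 1)), mul_assoc (Q ^ (k + 1)), mul_assoc (Q ^ (k + 1)), sub_self, add_zero]
    apply Finset.sum_congr rfl
    intro j hj
    have hj' : j ≤ k := by simpa [Nat.lt_succ_iff] using hj
    obtain ⟨l, rfl⟩ := Nat.exists_eq_add_of_le hj'
    rw [show j + l + 1 - j = l + 1 by omega, show j + l - j = l by omega]
    have a2 := qP_ne h0 h1 (l + 1)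
    rw [qP_succ] at *
    obtain ⟨b3, b4⟩ := mul_ne_zero_iff.1 a2
    field_simp
    ring
  rw [h4, h3]
  have h5 := gG_add_gH Q (m + (k + 1)) (k + 1)
  linear_combination h2 - (qPoch Q Q (k + 1))⁻¹ * h5

theorem rec_iii {Q : ℝ} (h0 : 0 < Q) (h1 : Q < 1) (m k : ℕ) :
    ∑ j ∈ Finset.range (k + 1 + 1), Q ^ (j * (j - 1)) * gG Q m j * (qPoch Q Q j)⁻¹ * (qPoch Q Q (k + 1 - j))⁻¹
      = gG Q (m + (k + 1)) (k + 1) * (qPoch Q Q (k + 1))⁻¹ := by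
  rcases m with _ | m
  · rw [Finset.sum_range_succ', Finset.sum_eq_zero]
    · simp [gG, gb_self, qP_zero]
    · intro j _; simp [gG]
  · rw [Finset.sum_range_succ']
    have hv := vand h0 h1 (k + 1) m 1 (m + k) (by omega)
    have : gG Q (m + 1 + (k + 1)) (k + 1) = gb Q (m + (k + 1)) (m + 1) := by
      rw [show m + 1 + (k + 1) = (m + 1 + k) + 1 by ring]
      change gb Q (m + 1 + k) k = _
      rw [← gb_symm h0 h1, show m + 1 + k = m + (k + 1) by ring]
    rw [this, ← hv, Finset.sum_mul]
    simp only [gG, mul_zero, zero_mul, add_zero]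
    rw [← Finset.sum_subset (Finset.range_mono (show k + 1 ≤ m + k + 1 by omega))]
    · apply Finset.sum_congr rfl
      intro j hj
      have hj' : j + 1 ≤ k + 1 := by simpa [Nat.lt_succ_iff] using hj
      rw [gb_eq' h0 h1 hj']
      have := qP_ne h0 h1 (k + 1)
      rw [Nat.add_sub_cancel, mul_comm (j + 1) j]
      field_simp
    · intro j _ hj
      rw [gb_lt Q (k + 1) (j + 1) (by simpa using hj)]; simp
end

/-! ### Adding and removing the first column -/

def upC (a : ℕ) (s : Multiset ℕ) : Multiset ℕ :=
  s.map (· + 1) + Multiset.replicate (a - s.card) 1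

def downC (s : Multiset ℕ) : Multiset ℕ := (s.map (· - 1)).filter (· ≠ 0)

theorem down_up (a : ℕ) (s : Multiset ℕ) (hs : ∀ i ∈ s, 0 < i) : downC (upC a s) = s := by
  unfold downC upC
  rw [Multiset.map_add, Multiset.filter_add, Multiset.map_map]
  have h1 : Multiset.map ((fun x => x - 1) ∘ fun x => x + 1) s = s := by
    conv_rhs => rw [← Multiset.map_id s]
    apply Multiset.map_congr rfl
    intro x _; simp
  rw [h1, Multiset.filter_eq_self.2 (fun i hi => (hs i hi).ne'), Multiset.map_replicate,
    Multiset.filter_eq_nil.2]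
  · simp
  · intro i hi
    have := Multiset.eq_of_mem_replicate hi
    simp [this]

theorem card_up (a : ℕ) (s : Multiset ℕ) (h : s.card ≤ a) : (upC a s).card = a := by
  simp [upC]; omega

theorem sum_up' (a : ℕ) (s : Multiset ℕ) (h : s.card ≤ a) : (upC a s).sum = a + s.sum := by
  simp [upC, Multiset.sum_map_add]; omega

theorem card_down (s : Multiset ℕ) : (downC s).card ≤ s.card := by
  unfold downC
  exact (Multiset.card_le_card (Multiset.filter_le _ _)).trans (by simp)

theorem downC_cons (x : ℕ) (s : Multiset ℕ) :
    downC (x ::ₘ s) = if x - 1 ≠ 0 then (x - 1) ::ₘ downC s else downC s := by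
  unfold downC
  rw [Multiset.map_cons, Multiset.filter_cons]
  split_ifs <;> simp

theorem up_down (s : Multiset ℕ) : (∀ i ∈ s, 0 < i) → upC s.card (downC s) = s := by
  induction s using Multiset.induction with
  | empty => intro _; simp [upC, downC]
  | cons x s ih =>
    intro hs
    have ih' := ih (fun i hi => hs i (Multiset.mem_cons_of_mem hi))
    have hx := hs x (Multiset.mem_cons_self x s)
    have hc := card_down s
    rw [downC_cons]
    split_ifs with h
    · unfold upC at *
      rw [Multiset.map_cons, Multiset.card_cons, Multiset.card_cons, Nat.add_sub_add_right,
        Multiset.cons_add, ih']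
      congr 1; omega
    · obtain rfl : x = 1 := by omega
      unfold upC at *
      rw [Multiset.card_cons, show s.card + 1 - (downC s).card = (s.card - (downC s).card) + 1 by omega,
        Multiset.replicate_succ, Multiset.add_cons, ih']

theorem sum_down (s : Multiset ℕ) (hs : ∀ i ∈ s, 0 < i) : s.card + (downC s).sum = s.sum := by
  conv_rhs => rw [← up_down s hs]
  rw [sum_up' _ _ (card_down s)]

theorem up_pos (a : ℕ) (s : Multiset ℕ) : ∀ {i}, i ∈ upC a s → 0 < i := by
  intro i hi
  unfold upC at hi
  rcases Multiset.mem_add.1 hi with h | h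
  · obtain ⟨j, _, rfl⟩ := Multiset.mem_map.1 h; omega
  · rw [Multiset.eq_of_mem_replicate h]; omega

theorem sum_upC (F : Multiset ℕ → ℝ) (a n : ℕ) :
    ∑ lam : Nat.Partition (a + n), (if lam.parts.card = a then F lam.parts else 0)
    = ∑ mu : Nat.Partition n, (if mu.parts.card ≤ a then F (upC a mu.parts) else 0) := by
  rw [← Finset.sum_filter, ← Finset.sum_filter]
  refine Finset.sum_bij'
    (fun lam hl => (⟨downC lam.parts, ?_, ?_⟩ : Nat.Partition n))
    (fun mu hm => (⟨upC a mu.parts, fun h => up_pos a _ h, ?_⟩ : Nat.Partition (a + n))) ?_ ?_ ?_ ?_ ?_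
  · intro i hi
    have := (Multiset.mem_filter.1 hi).2
    omega
  · have h1 := sum_down lam.parts (fun i hi => lam.parts_pos hi)
    have h2 := lam.parts_sum
    have h3 := (Finset.mem_filter.1 hl).2
    omega
  · rw [sum_up' _ _ (Finset.mem_filter.1 hm).2, mu.parts_sum]
  · intro lam hl
    have h3 := (Finset.mem_filter.1 hl).2
    simp only [Finset.mem_filter, Finset.mem_univ, true_and]
    exact (card_down _).trans h3.le
  · intro mu hm
    simp only [Finset.mem_filter, Finset.mem_univ, true_and]
    exact card_up _ _ (Finset.mem_filter.1 hm).2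
  · intro lam hl
    have h3 := (Finset.mem_filter.1 hl).2
    ext1
    have h4 := up_down _ (fun i hi => lam.parts_pos hi)
    rw [h3] at h4
    exact h4
  · intro mu hm
    ext1
    exact down_up _ _ (fun i hi => mu.parts_pos hi)
  · intro lam hl
    have h3 := (Finset.mem_filter.1 hl).2
    have h4 := up_down _ (fun i hi => lam.parts_pos hi)
    rw [h3] at h4
    simp only [h4]

/-! ### Weights -/

def cL (s : Multiset ℕ) (i : ℕ) : ℕ := (s.filter (fun j => i ≤ j)).card
def nO (s : Multiset ℕ) : ℕ := (s.filter (fun j => Odd j)).card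

theorem cL_up_succ (a : ℕ) (s : Multiset ℕ) (i : ℕ) : cL (upC a s) (i + 2) = cL s (i + 1) := by
  unfold cL upC
  rw [Multiset.filter_add, Multiset.filter_map, Multiset.card_add, Multiset.card_map,
    (Multiset.filter_eq_nil (s := Multiset.replicate (a - s.card) 1)).2]
  · simp
  · intro j hj
    rw [Multiset.eq_of_mem_replicate hj]; omega

theorem cL_one (s : Multiset ℕ) (hs : ∀ i ∈ s, 0 < i) : cL s 1 = s.card := by
  unfold cL
  rw [Multiset.filter_eq_self.2]
  intro i hi
  exact hs i hi

theorem count_up_one (a : ℕ) (s : Multiset ℕ) (hs : ∀ i ∈ s, 0 < i) :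
    (upC a s).count 1 = a - s.card := by
  unfold upC
  rw [Multiset.count_add, Multiset.count_replicate_self, Multiset.count_eq_zero_of_notMem]
  · simp
  · intro h
    obtain ⟨j, hj, h⟩ := Multiset.mem_map.1 h
    have := hs j hj; omega

theorem count_up_succ (a : ℕ) (s : Multiset ℕ) (i : ℕ) :
    (upC a s).count (i + 2) = s.count (i + 1) := by
  unfold upC
  rw [Multiset.count_add, Multiset.count_replicate, if_neg (by omega), add_zero]
  exact Multiset.count_map_eq_count' (fun x => x + 1) s (add_left_injective 1) (i + 1)

theorem nO_up (a : ℕ) (s : Multiset ℕ) (h : s.card ≤ a) : nO (upC a s) + nO s = a := by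
  unfold nO upC
  rw [Multiset.filter_add, Multiset.filter_map, Multiset.card_add, Multiset.card_map,
    (Multiset.filter_eq_self (s := Multiset.replicate (a - s.card) 1)).2, Multiset.card_replicate]
  · have h1 : Multiset.filter ((fun j => Odd j) ∘ fun x => x + 1) s = Multiset.filter (fun j => ¬ Odd j) s := by
      apply Multiset.filter_congr
      intro x _
      simp [Nat.odd_add_one]
    rw [h1]
    have h2 := congrArg Multiset.card (Multiset.filter_add_not (fun j => Odd j) s)
    rw [Multiset.card_add] at h2
    omega
  · intro j hj
    rw [Multiset.eq_of_mem_replicate hj]; decide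

open Classical in
noncomputable def wO (q : ℝ) (N : ℕ) (s : Multiset ℕ) : ℝ :=
  if ∀ i, Even i → Even (s.count i) then
    q ^ (-((∑ i ∈ Finset.range N, (cL s (i + 1) : ℝ) ^ 2) - (nO s : ℝ)) / 2)
     * (∏ i ∈ Finset.range N, qPoch (q ^ (-2 : ℤ)) (q ^ (-2 : ℤ)) (s.count (i + 1) / 2))⁻¹
  else 0

open Classical in
noncomputable def wS (q : ℝ) (N : ℕ) (s : Multiset ℕ) : ℝ :=
  if ∀ i, Odd i → Even (s.count i) then
    q ^ (-((∑ i ∈ Finset.range N, (cL s (i + 1) : ℝ) ^ 2) + (nO s : ℝ)) / 2)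
     * (∏ i ∈ Finset.range N, qPoch (q ^ (-2 : ℤ)) (q ^ (-2 : ℤ)) (s.count (i + 1) / 2))⁻¹
  else 0

open Classical in
theorem wO_up {q : ℝ} (hq : 0 < q) (N a : ℕ) (s : Multiset ℕ) (hs : ∀ i ∈ s, 0 < i) (h : s.card ≤ a) :
    wO q (N + 1) (upC a s) = q ^ (-((a : ℝ) ^ 2 - a) / 2) *
      (qPoch (q ^ (-2 : ℤ)) (q ^ (-2 : ℤ)) ((a - s.card) / 2))⁻¹ * wS q N s := by
  have h0 : (upC a s).count 0 = 0 :=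
    Multiset.count_eq_zero_of_notMem (fun h => absurd (up_pos a s h) (by omega))
  have hcond : (∀ i, Even i → Even ((upC a s).count i)) ↔ (∀ i, Odd i → Even (s.count i)) := by
    constructor
    · intro H i hi
      obtain ⟨k, rfl⟩ := hi
      rw [← count_up_succ a]
      exact H _ ⟨k + 1, by ring⟩
    · intro H i hi
      rcases i with _ | _ | i
      · rw [h0]; simp
      · simp at hi
      · rw [count_up_succ]; apply H
        obtain ⟨k, hk⟩ := hi
        exact ⟨k - 1, by omega⟩
  unfold wO wS
  simp only [hcond]
  split_ifs with H
  · rw [Finset.sum_range_succ', Finset.prod_range_succ']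
    simp only [zero_add, cL_up_succ, count_up_succ, count_up_one a s hs,
      cL_one _ (fun i hi => up_pos a s hi), card_up a s h]
    have hn : (nO (upC a s) : ℝ) = a - nO s := by
      rw [eq_sub_iff_add_eq]; exact_mod_cast nO_up a s h
    rw [hn, mul_inv]
    rw [show (-((∑ i ∈ Finset.range N, (cL s (i + 1) : ℝ) ^ 2) + (a : ℝ) ^ 2 - (a - nO s)) / 2)
      = (-((a : ℝ) ^ 2 - a) / 2) + (-((∑ i ∈ Finset.range N, (cL s (i + 1) : ℝ) ^ 2) + (nO s : ℝ)) / 2) by ring,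
      Real.rpow_add hq]
    ring
  · simp

open Classical in
theorem wS_up {q : ℝ} (hq : 0 < q) (N a : ℕ) (s : Multiset ℕ) (hs : ∀ i ∈ s, 0 < i) (h : s.card ≤ a) :
    wS q (N + 1) (upC a s) = if Even (a - s.card) then q ^ (-((a : ℝ) ^ 2 + a) / 2) *
      (qPoch (q ^ (-2 : ℤ)) (q ^ (-2 : ℤ)) ((a - s.card) / 2))⁻¹ * wO q N s else 0 := by
  have h0 : s.count 0 = 0 :=
    Multiset.count_eq_zero_of_notMem (fun h => absurd (hs _ h) (by omega))
  have hcond : (∀ i, Odd i → Even ((upC a s).count i)) ↔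
      (Even (a - s.card) ∧ ∀ i, Even i → Even (s.count i)) := by
    constructor
    · intro H
      refine ⟨?_, fun i hi => ?_⟩
      · rw [← count_up_one a s hs]; exact H 1 (by decide)
      · rcases i with _ | i
        · rw [h0]; simp
        · rw [← count_up_succ a]
          apply H
          obtain ⟨k, hk⟩ := hi
          exact ⟨k, by omega⟩
    · rintro ⟨H1, H⟩ i hi
      rcases i with _ | _ | i
      · simp at hi
      · rw [zero_add, count_up_one a s hs]; exact H1
      · rw [count_up_succ]; apply H
        obtain ⟨k, hk⟩ := hi
        exact ⟨k, by omega⟩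
  unfold wO wS
  simp only [hcond]
  by_cases H1 : Even (a - s.card)
  · simp only [H1, true_and, if_true]
    split_ifs with H
    · rw [Finset.sum_range_succ', Finset.prod_range_succ']
      simp only [zero_add, cL_up_succ, count_up_succ, count_up_one a s hs,
        cL_one _ (fun i hi => up_pos a s hi), card_up a s h]
      have hn : (nO (upC a s) : ℝ) = a - nO s := by
        rw [eq_sub_iff_add_eq]; exact_mod_cast nO_up a s h
      rw [hn, mul_inv]
      rw [show (-((∑ i ∈ Finset.range N, (cL s (i + 1) : ℝ) ^ 2) + (a : ℝ) ^ 2 + (a - nO s)) / 2)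
        = (-((a : ℝ) ^ 2 + a) / 2) + (-((∑ i ∈ Finset.range N, (cL s (i + 1) : ℝ) ^ 2) - (nO s : ℝ)) / 2) by ring,
        Real.rpow_add hq]
      ring
    · simp
  · simp [H1]

noncomputable def sO (q : ℝ) (N n a : ℕ) : ℝ :=
  ∑ lam : Nat.Partition n, if lam.parts.card = a then wO q N lam.parts else 0

noncomputable def sS (q : ℝ) (N n a : ℕ) : ℝ :=
  ∑ lam : Nat.Partition n, if lam.parts.card = a then wS q N lam.parts else 0

theorem fiber_aux (n a : ℕ) (c : ℕ → ℝ) (G : Nat.Partition n → ℝ) :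
    ∑ mu : Nat.Partition n, (if mu.parts.card ≤ a then c mu.parts.card * G mu else 0)
    = ∑ b ∈ Finset.range (a + 1), c b * ∑ mu : Nat.Partition n, if mu.parts.card = b then G mu else 0 := by
  simp only [Finset.mul_sum]
  rw [Finset.sum_comm]
  apply Finset.sum_congr rfl
  intro mu _
  simp only [mul_ite, mul_zero]
  rw [Finset.sum_ite_eq]
  simp

theorem sO_rec {q : ℝ} (hq : 0 < q) (N a n : ℕ) :
    sO q (N + 1) (a + n) a = q ^ (-((a : ℝ) ^ 2 - a) / 2) * ∑ b ∈ Finset.range (a + 1),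
      (qPoch (q ^ (-2 : ℤ)) (q ^ (-2 : ℤ)) ((a - b) / 2))⁻¹ * sS q N n b := by
  unfold sO sS
  rw [sum_upC, ← fiber_aux n a (fun b => (qPoch (q ^ (-2 : ℤ)) (q ^ (-2 : ℤ)) ((a - b) / 2))⁻¹)
    (fun mu => wS q N mu.parts), Finset.mul_sum]
  apply Finset.sum_congr rfl
  intro mu _
  split_ifs with h
  · rw [wO_up hq _ _ _ (fun i hi => mu.parts_pos hi) h]; ring
  · simp

theorem sS_rec {q : ℝ} (hq : 0 < q) (N a n : ℕ) :
    sS q (N + 1) (a + n) a = q ^ (-((a : ℝ) ^ 2 + a) / 2) * ∑ b ∈ Finset.range (a + 1),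
      (if Even (a - b) then (qPoch (q ^ (-2 : ℤ)) (q ^ (-2 : ℤ)) ((a - b) / 2))⁻¹ else 0) * sO q N n b := by
  unfold sO sS
  rw [sum_upC, ← fiber_aux n a (fun b => if Even (a - b) then (qPoch (q ^ (-2 : ℤ)) (q ^ (-2 : ℤ)) ((a - b) / 2))⁻¹ else 0)
    (fun mu => wO q N mu.parts), Finset.mul_sum]
  apply Finset.sum_congr rfl
  intro mu _
  split_ifs with h
  · rw [wS_up hq _ _ _ (fun i hi => mu.parts_pos hi) h, if_pos ‹_›]; ring
  · rw [wS_up hq _ _ _ (fun i hi => mu.parts_pos hi) h, if_neg ‹_›]; ring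
  · simp

theorem card_le_part {n : ℕ} (lam : Nat.Partition n) : lam.parts.card ≤ n := by
  have := sum_down lam.parts (fun i hi => lam.parts_pos hi)
  have := lam.parts_sum
  omega

theorem sO_gt (q : ℝ) (N n a : ℕ) (h : n < a) : sO q N n a = 0 := by
  unfold sO; apply Finset.sum_eq_zero; intro lam _
  have := card_le_part lam
  rw [if_neg (by omega)]

theorem sS_gt (q : ℝ) (N n a : ℕ) (h : n < a) : sS q N n a = 0 := by
  unfold sS; apply Finset.sum_eq_zero; intro lam _
  have := card_le_part lam
  rw [if_neg (by omega)]

theorem card_ne_zero {n : ℕ} (h : 0 < n) (lam : Nat.Partition n) : lam.parts.card ≠ 0 := by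
  intro h0
  have h1 := Multiset.card_eq_zero.1 h0
  have := lam.parts_sum
  rw [h1] at this
  simp at this; omega

theorem sO_pos_zero (q : ℝ) (N n : ℕ) (h : 0 < n) : sO q N n 0 = 0 := by
  unfold sO; apply Finset.sum_eq_zero; intro lam _
  rw [if_neg (card_ne_zero h lam)]

theorem sS_pos_zero (q : ℝ) (N n : ℕ) (h : 0 < n) : sS q N n 0 = 0 := by
  unfold sS; apply Finset.sum_eq_zero; intro lam _
  rw [if_neg (card_ne_zero h lam)]

theorem parts_zero (lam : Nat.Partition 0) : lam.parts = 0 := by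
  have := card_le_part lam
  exact Multiset.card_eq_zero.1 (by omega)

theorem sO_zero_zero (q : ℝ) (N : ℕ) : sO q N 0 0 = 1 := by
  unfold sO
  rw [Fintype.sum_unique]
  simp [wO, cL, nO, qP_zero]

theorem sS_zero_zero (q : ℝ) (N : ℕ) : sS q N 0 0 = 1 := by
  unfold sS
  rw [Fintype.sum_unique]
  simp [wS, cL, nO, qP_zero]

/-! ### Closed forms -/

theorem sum_split_even (f : ℕ → ℝ) (k : ℕ) :
    ∑ a ∈ Finset.range (2 * k + 1), f a
    = ∑ j ∈ Finset.range (k + 1), f (2 * j) + ∑ j ∈ Finset.range k, f (2 * j + 1) := by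
  induction k with
  | zero => simp
  | succ k ih =>
    rw [show 2 * (k + 1) + 1 = 2 * k + 1 + 1 + 1 by ring, Finset.sum_range_succ, Finset.sum_range_succ, ih,
      Finset.sum_range_succ _ (k + 1), Finset.sum_range_succ _ k, Finset.sum_range_succ _ k]
    rw [show 2 * (k + 1) = 2 * k + 1 + 1 by ring]
    ring

theorem sum_split_odd (f : ℕ → ℝ) (k : ℕ) :
    ∑ a ∈ Finset.range (2 * k + 1 + 1), f a
    = ∑ j ∈ Finset.range (k + 1), f (2 * j) + ∑ j ∈ Finset.range (k + 1), f (2 * j + 1) := by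
  rw [Finset.sum_range_succ, sum_split_even, Finset.sum_range_succ _ k, Finset.sum_range_succ _ k]
  ring

theorem Q_eq (q : ℝ) : q ^ (-2 : ℤ) = (q⁻¹) ^ 2 := by
  rw [zpow_neg, inv_pow]; rfl

theorem rpow_aux {q : ℝ} (hq : 0 < q) (x : ℝ) (e : ℕ) (h : x = -(e : ℝ)) : q ^ x = (q⁻¹) ^ e := by
  rw [h, Real.rpow_neg hq.le, Real.rpow_natCast, inv_pow]

theorem pre_O_even {q : ℝ} (hq : 0 < q) (k : ℕ) :
    q ^ (-(((2 * (k + 1) : ℕ) : ℝ) ^ 2 - ((2 * (k + 1) : ℕ) : ℝ)) / 2)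
      = (q⁻¹) ^ (k + 1) * (q ^ (-2 : ℤ)) ^ ((k + 1) * k) := by
  rw [Q_eq, ← pow_mul, ← pow_add]
  apply rpow_aux hq
  push_cast; ring

theorem pre_O_odd {q : ℝ} (hq : 0 < q) (k : ℕ) :
    q ^ (-(((2 * k + 1 : ℕ) : ℝ) ^ 2 - ((2 * k + 1 : ℕ) : ℝ)) / 2)
      = (q⁻¹) ^ k * (q ^ (-2 : ℤ)) ^ (k * k) := by
  rw [Q_eq, ← pow_mul, ← pow_add]
  apply rpow_aux hq
  push_cast; ring

theorem pre_S_even {q : ℝ} (hq : 0 < q) (k : ℕ) :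
    q ^ (-(((2 * k : ℕ) : ℝ) ^ 2 + ((2 * k : ℕ) : ℝ)) / 2)
      = (q⁻¹) ^ k * (q ^ (-2 : ℤ)) ^ (k * k) := by
  rw [Q_eq, ← pow_mul, ← pow_add]
  apply rpow_aux hq
  push_cast; ring

theorem pre_S_odd {q : ℝ} (hq : 0 < q) (k : ℕ) :
    q ^ (-(((2 * k + 1 : ℕ) : ℝ) ^ 2 + ((2 * k + 1 : ℕ) : ℝ)) / 2)
      = (q⁻¹) ^ (k + 1) * (q ^ (-2 : ℤ)) ^ (k * (k + 1)) := by
  rw [Q_eq, ← pow_mul, ← pow_add]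
  apply rpow_aux hq
  push_cast; ring

theorem gG_lt (Q : ℝ) (m k : ℕ) (h : m < k) : gG Q m k = 0 := by
  obtain ⟨k, rfl⟩ := Nat.exists_eq_add_of_le' (by omega : 1 ≤ k)
  rcases m with _ | m
  · rfl
  · exact gb_lt Q _ _ (by omega)

theorem gH_le (Q : ℝ) (m k : ℕ) (h : m ≤ k) : gH Q m k = 0 := by
  rcases m with _ | m
  · rfl
  · exact gb_lt Q _ _ (by omega)

structure Closed (q : ℝ) (N : ℕ) : Prop where
  c1 : ∀ m k, 2 * m ≤ N → sS q N (2 * m) (2 * k) = (q⁻¹) ^ m *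
    ((q ^ (-2 : ℤ)) ^ (k * k) * gG (q ^ (-2 : ℤ)) m k * (qPoch (q ^ (-2 : ℤ)) (q ^ (-2 : ℤ)) k)⁻¹)
  c2 : ∀ m k, 2 * m ≤ N → sS q N (2 * m) (2 * k + 1) = (q⁻¹) ^ m *
    ((q ^ (-2 : ℤ)) ^ (k * (k + 1)) * gH (q ^ (-2 : ℤ)) m k * (qPoch (q ^ (-2 : ℤ)) (q ^ (-2 : ℤ)) k)⁻¹)
  c3 : ∀ m k, 2 * m ≤ N → sO q N (2 * m) (2 * k) = (q⁻¹) ^ m *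
    ((q ^ (-2 : ℤ)) ^ (k * (k - 1)) * gG (q ^ (-2 : ℤ)) m k * (qPoch (q ^ (-2 : ℤ)) (q ^ (-2 : ℤ)) k)⁻¹)
  c4 : ∀ m k, 2 * m ≤ N → sO q N (2 * m) (2 * k + 1) = 0
  c5 : ∀ m k, 2 * m + 1 ≤ N → sO q N (2 * m + 1) (2 * k + 1) = (q⁻¹) ^ m *
    ((q ^ (-2 : ℤ)) ^ (k * k) * gb (q ^ (-2 : ℤ)) m k * (qPoch (q ^ (-2 : ℤ)) (q ^ (-2 : ℤ)) k)⁻¹)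
  c6 : ∀ m k, 2 * m + 1 ≤ N → sO q N (2 * m + 1) (2 * k) = 0
  c7 : ∀ m b, 2 * m + 1 ≤ N → sS q N (2 * m + 1) b = 0

theorem closed_zero (q : ℝ) : Closed q 0 where
  c1 := by
    intro m k h
    obtain rfl : m = 0 := by omega
    rcases k with _ | k
    · simp [sS_zero_zero, gG, qP_zero]
    · rw [sS_gt _ _ _ _ (by omega), gG_lt _ _ _ (by omega)]; simp
  c2 := by
    intro m k h
    obtain rfl : m = 0 := by omega
    rw [sS_gt _ _ _ _ (by omega), gH_le _ _ _ (by omega)]; simp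
  c3 := by
    intro m k h
    obtain rfl : m = 0 := by omega
    rcases k with _ | k
    · simp [sO_zero_zero, gG, qP_zero]
    · rw [sO_gt _ _ _ _ (by omega), gG_lt _ _ _ (by omega)]; simp
  c4 := by
    intro m k h
    rw [sO_gt _ _ _ _ (by omega)]
  c5 := by intro m k h; omega
  c6 := by intro m k h; omega
  c7 := by intro m k h; omega

theorem closed_all {q : ℝ} (hq : 1 < q) (N : ℕ) : Closed q N := by
  have hq0 : 0 < q := by linarith
  have h0 : 0 < q ^ (-2 : ℤ) := by positivity
  have h1 : q ^ (-2 : ℤ) < 1 := by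
    rw [Q_eq]; exact pow_lt_one₀ (by positivity) (inv_lt_one_of_one_lt₀ hq) (by norm_num)
  induction N with
  | zero => exact closed_zero q
  | succ N ih =>
    refine ⟨?_, ?_, ?_, ?_, ?_, ?_, ?_⟩
    · intro m k h
      by_cases hmk : m < k
      · rw [sS_gt _ _ _ _ (by omega), gG_lt _ _ _ hmk]; simp
      obtain ⟨m, rfl⟩ := Nat.exists_eq_add_of_le' (not_lt.1 hmk)
      rcases k with _ | k
      · rcases m with _ | m
        · simp [sS_zero_zero, gG, qP_zero]
        · rw [mul_zero, sS_pos_zero _ _ _ (by omega)]; simp [gG]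
      · rw [show 2 * (m + (k + 1)) = 2 * (k + 1) + 2 * m by ring, sS_rec hq0, pre_S_even hq0, sum_split_even,
          Finset.sum_eq_zero (s := Finset.range (k + 1))]
        · have e : ∀ j ∈ Finset.range (k + 1 + 1),
            (if Even (2 * (k + 1) - 2 * j) then (qPoch (q ^ (-2 : ℤ)) (q ^ (-2 : ℤ)) ((2 * (k + 1) - 2 * j) / 2))⁻¹ else 0) *
              sO q N (2 * m) (2 * j) = (q⁻¹) ^ m * ((q ^ (-2 : ℤ)) ^ (j * (j - 1)) * gG (q ^ (-2 : ℤ)) m j *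
               (qPoch (q ^ (-2 : ℤ)) (q ^ (-2 : ℤ)) j)⁻¹ * (qPoch (q ^ (-2 : ℤ)) (q ^ (-2 : ℤ)) (k + 1 - j))⁻¹) := by
            intro j _
            rw [if_pos (by rw [← Nat.mul_sub]; simp), ih.c3 m j (by omega), ← Nat.mul_sub,
              Nat.mul_div_cancel_left _ (by norm_num)]
            ring
          rw [Finset.sum_congr rfl e, ← Finset.mul_sum, rec_iii h0 h1]
          ring
        · intro j hj
          rw [ih.c4 m j (by omega), mul_zero]
    · intro m k h
      by_cases hmk : m ≤ k
      · rw [sS_gt _ _ _ _ (by omega), gH_le _ _ _ hmk]; simp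
      obtain ⟨m, rfl⟩ := Nat.exists_eq_add_of_le' (not_le.1 hmk)
      rw [show 2 * (m + (k + 1)) = (2 * k + 1) + (2 * m + 1) by ring, sS_rec hq0, pre_S_odd hq0, sum_split_odd,
          Finset.sum_eq_zero (fun j hj => by rw [ih.c6 m j (by omega), mul_zero]), zero_add]
      have e : ∀ j ∈ Finset.range (k + 1),
            (if Even (2 * k + 1 - (2 * j + 1)) then (qPoch (q ^ (-2 : ℤ)) (q ^ (-2 : ℤ)) ((2 * k + 1 - (2 * j + 1)) / 2))⁻¹ else 0) *
              sO q N (2 * m + 1) (2 * j + 1) = (q⁻¹) ^ m * ((q ^ (-2 : ℤ)) ^ (j * j) * gb (q ^ (-2 : ℤ)) m j *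
               (qPoch (q ^ (-2 : ℤ)) (q ^ (-2 : ℤ)) j)⁻¹ * (qPoch (q ^ (-2 : ℤ)) (q ^ (-2 : ℤ)) (k - j))⁻¹) := by
            intro j _
            rw [Nat.add_sub_add_right, if_pos (by rw [← Nat.mul_sub]; simp), ih.c5 m j (by omega), ← Nat.mul_sub,
              Nat.mul_div_cancel_left _ (by norm_num)]
            ring
      rw [Finset.sum_congr rfl e, ← Finset.mul_sum, rec_iv h0 h1, show m + (k + 1) = (m + k) + 1 by ring, gH]
      ring
    · intro m k h
      by_cases hmk : m < k
      · rw [sO_gt _ _ _ _ (by omega), gG_lt _ _ _ hmk]; simp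
      obtain ⟨m, rfl⟩ := Nat.exists_eq_add_of_le' (not_lt.1 hmk)
      rcases k with _ | k
      · rcases m with _ | m
        · simp [sO_zero_zero, gG, qP_zero]
        · rw [mul_zero, sO_pos_zero _ _ _ (by omega)]; simp [gG]
      · rw [show 2 * (m + (k + 1)) = 2 * (k + 1) + 2 * m by ring, sO_rec hq0, pre_O_even hq0, sum_split_even]
        have e : ∀ j ∈ Finset.range (k + 1 + 1),
            (qPoch (q ^ (-2 : ℤ)) (q ^ (-2 : ℤ)) ((2 * (k + 1) - 2 * j) / 2))⁻¹ *
              sS q N (2 * m) (2 * j) = (q⁻¹) ^ m * ((q ^ (-2 : ℤ)) ^ (j * j) * gG (q ^ (-2 : ℤ)) m j *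
               (qPoch (q ^ (-2 : ℤ)) (q ^ (-2 : ℤ)) j)⁻¹ * (qPoch (q ^ (-2 : ℤ)) (q ^ (-2 : ℤ)) (k + 1 - j))⁻¹) := by
            intro j _
            rw [ih.c1 m j (by omega), ← Nat.mul_sub,
              Nat.mul_div_cancel_left _ (by norm_num)]
            ring
        have e' : ∀ j ∈ Finset.range (k + 1),
            (qPoch (q ^ (-2 : ℤ)) (q ^ (-2 : ℤ)) ((2 * (k + 1) - (2 * j + 1)) / 2))⁻¹ *
              sS q N (2 * m) (2 * j + 1) = (q⁻¹) ^ m * ((q ^ (-2 : ℤ)) ^ (j * (j + 1)) * gH (q ^ (-2 : ℤ)) m j *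
               (qPoch (q ^ (-2 : ℤ)) (q ^ (-2 : ℤ)) j)⁻¹ * (qPoch (q ^ (-2 : ℤ)) (q ^ (-2 : ℤ)) (k - j))⁻¹) := by
            intro j hj
            have := Finset.mem_range.1 hj
            rw [ih.c2 m j (by omega), show (2 * (k + 1) - (2 * j + 1)) / 2 = k - j by omega]
            ring
        rw [Finset.sum_congr rfl e, Finset.sum_congr rfl e', ← Finset.mul_sum, ← Finset.mul_sum,
          ← mul_add, rec_i h0 h1, Nat.add_sub_cancel]
        ring
    · intro m k h
      by_cases hmk : m ≤ k
      · rw [sO_gt _ _ _ _ (by omega)]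
      obtain ⟨m, rfl⟩ := Nat.exists_eq_add_of_le' (not_le.1 hmk)
      rw [show 2 * (m + (k + 1)) = (2 * k + 1) + (2 * m + 1) by ring, sO_rec hq0,
          Finset.sum_eq_zero (fun j hj => by rw [ih.c7 m j (by omega), mul_zero]), mul_zero]
    · intro m k h
      by_cases hmk : m < k
      · rw [sO_gt _ _ _ _ (by omega), gb_lt _ _ _ hmk]; simp
      obtain ⟨m, rfl⟩ := Nat.exists_eq_add_of_le' (not_lt.1 hmk)
      rw [show 2 * (m + k) + 1 = (2 * k + 1) + 2 * m by ring, sO_rec hq0, pre_O_odd hq0, sum_split_odd]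
      have e : ∀ j ∈ Finset.range (k + 1),
            (qPoch (q ^ (-2 : ℤ)) (q ^ (-2 : ℤ)) ((2 * k + 1 - 2 * j) / 2))⁻¹ *
              sS q N (2 * m) (2 * j) = (q⁻¹) ^ m * ((q ^ (-2 : ℤ)) ^ (j * j) * gG (q ^ (-2 : ℤ)) m j *
               (qPoch (q ^ (-2 : ℤ)) (q ^ (-2 : ℤ)) j)⁻¹ * (qPoch (q ^ (-2 : ℤ)) (q ^ (-2 : ℤ)) (k - j))⁻¹) := by
            intro j hj
            have := Finset.mem_range.1 hj
            rw [ih.c1 m j (by omega), show (2 * k + 1 - 2 * j) / 2 = k - j by omega]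
            ring
      have e' : ∀ j ∈ Finset.range (k + 1),
            (qPoch (q ^ (-2 : ℤ)) (q ^ (-2 : ℤ)) ((2 * k + 1 - (2 * j + 1)) / 2))⁻¹ *
              sS q N (2 * m) (2 * j + 1) = (q⁻¹) ^ m * ((q ^ (-2 : ℤ)) ^ (j * (j + 1)) * gH (q ^ (-2 : ℤ)) m j *
               (qPoch (q ^ (-2 : ℤ)) (q ^ (-2 : ℤ)) j)⁻¹ * (qPoch (q ^ (-2 : ℤ)) (q ^ (-2 : ℤ)) (k - j))⁻¹) := by
            intro j hj
            have := Finset.mem_range.1 hj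
            rw [ih.c2 m j (by omega), show (2 * k + 1 - (2 * j + 1)) / 2 = k - j by omega]
            ring
      rw [Finset.sum_congr rfl e, Finset.sum_congr rfl e', ← Finset.mul_sum, ← Finset.mul_sum,
          ← mul_add, rec_ii h0 h1]
      ring
    · intro m k h
      by_cases hmk : m < k
      · rw [sO_gt _ _ _ _ (by omega)]
      obtain ⟨m, rfl⟩ := Nat.exists_eq_add_of_le' (not_lt.1 hmk)
      rcases k with _ | k
      · rw [mul_zero, sO_pos_zero _ _ _ (by omega)]
      rw [show 2 * (m + (k + 1)) + 1 = 2 * (k + 1) + (2 * m + 1) by ring, sO_rec hq0,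
          Finset.sum_eq_zero (fun j hj => by rw [ih.c7 m j (by omega), mul_zero]), mul_zero]
    · intro m b h
      rcases Nat.even_or_odd' b with ⟨k, rfl | rfl⟩
      · by_cases hmk : m < k
        · rw [sS_gt _ _ _ _ (by omega)]
        obtain ⟨m, rfl⟩ := Nat.exists_eq_add_of_le' (not_lt.1 hmk)
        rcases k with _ | k
        · rw [mul_zero, sS_pos_zero _ _ _ (by omega)]
        rw [show 2 * (m + (k + 1)) + 1 = 2 * (k + 1) + (2 * m + 1) by ring, sS_rec hq0, Finset.sum_eq_zero, mul_zero]
        intro j hj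
        have := Finset.mem_range.1 hj
        split_ifs with he
        · obtain ⟨r, hr⟩ := he
          obtain ⟨i, rfl⟩ : ∃ i, j = 2 * i := ⟨k + 1 - r, by omega⟩
          rw [ih.c6 m i (by omega), mul_zero]
        · rw [zero_mul]
      · by_cases hmk : m < k
        · rw [sS_gt _ _ _ _ (by omega)]
        obtain ⟨m, rfl⟩ := Nat.exists_eq_add_of_le' (not_lt.1 hmk)
        rw [show 2 * (m + k) + 1 = 2 * k + 1 + 2 * m by ring, sS_rec hq0, Finset.sum_eq_zero, mul_zero]
        intro j hj
        have := Finset.mem_range.1 hj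
        split_ifs with he
        · obtain ⟨r, hr⟩ := he
          obtain ⟨i, rfl⟩ : ∃ i, j = 2 * i + 1 := ⟨k - r, by omega⟩
          rw [ih.c4 m i (by omega), mul_zero]
        · rw [zero_mul]

open Classical in
/-- Anzanello's third conjecture. -/
theorem anzanello_third_conjecture (q : ℝ) (hq : 1 < q) (m : ℕ) (hm : 1 ≤ m) :
    (∑ lam : Nat.Partition (2 * m),
      if ∀ i, Even i → Even (lam.parts.count i) then
        (1 - q ^ (-(colLen lam 1 : ℝ))) /
          (q ^ ((((∑ i ∈ Finset.Icc 1 (2 * m), ((colLen lam i : ℝ)) ^ 2))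
                - (numOddParts lam : ℝ)) / 2)
            * ∏ i ∈ Finset.Icc 1 (2 * m),
                qPoch (q ^ (-2 : ℤ)) (q ^ (-2 : ℤ)) (lam.parts.count i / 2))
      else 0)
    = 1 / q ^ m * ∑ i ∈ Finset.Icc 1 m,
        (-1 : ℝ) ^ (i - 1)
          / (q ^ (i * (i - 1)) * qPoch (q ^ (-2 : ℤ)) (q ^ (-2 : ℤ)) (m - i)) := by
  have hq0 : 0 < q := by linarith
  have h0 : 0 < q ^ (-2 : ℤ) := by positivity
  have h1 : q ^ (-2 : ℤ) < 1 := by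
    rw [Q_eq]; exact pow_lt_one₀ (by positivity) (inv_lt_one_of_one_lt₀ hq) (by norm_num)
  have hIcc : ∀ N, Finset.Icc 1 N = (Finset.range N).image (· + 1) := by
    intro N; ext x; simp only [Finset.mem_Icc, Finset.mem_image, Finset.mem_range]
    constructor
    · rintro ⟨a, b⟩; exact ⟨x - 1, by omega, by omega⟩
    · rintro ⟨a, b, rfl⟩; omega
  have hS : ∀ (N : ℕ) (f : ℕ → ℝ), ∑ i ∈ Finset.Icc 1 N, f i = ∑ i ∈ Finset.range N, f (i + 1) := by
    intro N f; rw [hIcc, Finset.sum_image (by intro a _ b _ h; simpa using h)]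
  have hP : ∀ (N : ℕ) (f : ℕ → ℝ), ∏ i ∈ Finset.Icc 1 N, f i = ∏ i ∈ Finset.range N, f (i + 1) := by
    intro N f; rw [hIcc, Finset.prod_image (by intro a _ b _ h; simpa using h)]
  -- left side as a sum of weights
  have hL : ∀ lam : Nat.Partition (2 * m),
      (if ∀ i, Even i → Even (lam.parts.count i) then
        (1 - q ^ (-(colLen lam 1 : ℝ))) /
          (q ^ ((((∑ i ∈ Finset.Icc 1 (2 * m), ((colLen lam i : ℝ)) ^ 2))
                - (numOddParts lam : ℝ)) / 2)
            * ∏ i ∈ Finset.Icc 1 (2 * m),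
                qPoch (q ^ (-2 : ℤ)) (q ^ (-2 : ℤ)) (lam.parts.count i / 2))
      else 0) = if lam.parts.card ≤ 2 * m then
        (1 - (q⁻¹) ^ lam.parts.card) * wO q (2 * m) lam.parts else 0 := by
    intro lam
    rw [if_pos (card_le_part lam)]
    unfold wO
    split_ifs with H
    · rw [hS, hP]
      have hc : colLen lam 1 = lam.parts.card := cL_one _ (fun i hi => lam.parts_pos hi)
      rw [hc, rpow_aux hq0 _ _ rfl, neg_div, Real.rpow_neg hq0.le, div_eq_mul_inv, mul_inv]
      rfl
    · simp
  rw [Finset.sum_congr rfl (fun lam _ => hL lam),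
    fiber_aux (2 * m) (2 * m) (fun b => 1 - (q⁻¹) ^ b) (fun lam => wO q (2 * m) lam.parts)]
  change ∑ b ∈ Finset.range (2 * m + 1), (1 - (q⁻¹) ^ b) * sO q (2 * m) (2 * m) b = _
  have hcl := closed_all hq (2 * m)
  rw [sum_split_even, Finset.sum_eq_zero (s := Finset.range m)
    (fun j _ => by rw [hcl.c4 m j le_rfl, mul_zero]), add_zero]
  obtain ⟨n, rfl⟩ := Nat.exists_eq_add_of_le' hm
  rw [Finset.sum_range_succ', mul_zero, pow_zero, sub_self, zero_mul, add_zero, hS]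
  have e1 : ∀ k ∈ Finset.range (n + 1), (1 - (q⁻¹) ^ (2 * (k + 1))) * sO q (2 * (n + 1)) (2 * (n + 1)) (2 * (k + 1))
      = (q⁻¹) ^ (n + 1) * ((q ^ (-2 : ℤ)) ^ (k * (k + 1)) * gb (q ^ (-2 : ℤ)) n k *
        (qPoch (q ^ (-2 : ℤ)) (q ^ (-2 : ℤ)) k)⁻¹) := by
    intro k _
    rw [hcl.c3 _ _ le_rfl, gG, pow_mul, ← Q_eq, Nat.add_sub_cancel, mul_comm (k + 1) k]
    have a2 := qP_ne h0 h1 (k + 1)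
    rw [qP_succ] at *
    obtain ⟨b3, b4⟩ := mul_ne_zero_iff.1 a2
    rw [mul_inv]
    have hinv := mul_inv_cancel₀ b4
    linear_combination ((q⁻¹) ^ (n + 1) * ((q ^ (-2 : ℤ)) ^ (k * (k + 1)) * gb (q ^ (-2 : ℤ)) n k *
        (qPoch (q ^ (-2 : ℤ)) (q ^ (-2 : ℤ)) k)⁻¹)) * hinv
  rw [Finset.sum_congr rfl e1, ← Finset.mul_sum, final_id h0 h1, one_div, inv_pow]
  congr 1
  apply Finset.sum_congr rfl
  intro i _
  rw [Nat.add_sub_cancel, Nat.add_sub_add_right, div_eq_mul_inv, mul_inv, ← mul_assoc, Q_eq, ← pow_mul,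
    Nat.mul_div_cancel' (Nat.even_mul_succ_self i).two_dvd, inv_pow, mul_comm (i + 1) i]
end

section
/- Let q be a real number with q > 1 and m ≥ 1 an integer. For 1 ≤ k ≤ m define a2_k = (1-q) · q^{-2k^2-k} / (q^{-2};q^{-2})_{k-1} · ( (q^{-2k};q^{-2})_{m-k} / (q^{-2};q^{-2})_{m-k} ) · q^{-m+k}. Then Σ_{k=1}^{m} a2_k = (1/(q^m (1+q))) · Σ_{i=1}^{m} (-1)^{i-1} q^{-i(i+1)} (1 - q^{2i}) / (1/q^2; 1/q^2)_{m-i}. -/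
namespace A2

lemma P_succ (x : ℝ) (n : ℕ) : qPoch x x (n+1) = qPoch x x n * (1 - x ^ (n+1)) := by
  unfold qPoch
  rw [Finset.prod_range_succ, pow_succ']

lemma P_zero (x : ℝ) : qPoch x x 0 = 1 := by simp [qPoch]

lemma one_sub_ne {x : ℝ} (h0 : 0 < x) (h1 : x < 1) (n : ℕ) : 1 - x ^ (n+1) ≠ 0 := by
  have : x ^ (n+1) < 1 := pow_lt_one₀ h0.le h1 (by omega)
  linarith

lemma P_ne {x : ℝ} (h0 : 0 < x) (h1 : x < 1) (n : ℕ) : qPoch x x n ≠ 0 := by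
  induction n with
  | zero => simp [P_zero]
  | succ n ih => rw [P_succ]; exact mul_ne_zero ih (one_sub_ne h0 h1 n)

lemma P_split (x : ℝ) (k d : ℕ) :
    qPoch x x k * qPoch (x ^ (k+1)) x d = qPoch x x (k+d) := by
  unfold qPoch
  rw [Finset.prod_range_add]
  congr 1
  apply Finset.prod_congr rfl
  intro j _
  ring

/-- The basic summand. -/
noncomputable def u (x : ℝ) (n k : ℕ) : ℝ :=
  if k ≤ n then x ^ (k^2) / (qPoch x x k ^ 2 * qPoch x x (n-k)) else 0

lemma u_step_n {x : ℝ} (h0 : 0 < x) (h1 : x < 1) (n k : ℕ) (hk : k ≤ n + 1) :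
    u x n k = (1 - x ^ (n+1-k)) * u x (n+1) k := by
  rcases Nat.lt_or_ge n k with h | h
  · have : k = n + 1 := by omega
    subst this
    simp [u]
  · obtain ⟨d, rfl⟩ := Nat.exists_eq_add_of_le h
    have e1 : k + d + 1 - k = d + 1 := by omega
    have e2 : k + d - k = d := by omega
    simp only [u, if_pos h, if_pos hk, e1, e2, P_succ]
    have := P_ne h0 h1 k
    have := P_ne h0 h1 d
    have := one_sub_ne h0 h1 d
    field_simp

lemma u_step_k {x : ℝ} (h0 : 0 < x) (h1 : x < 1) (n k : ℕ) (hk : k ≤ n) :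
    u x n (k+1) * (1 - x ^ (k+1)) ^ 2 = x ^ (2*k+1) * (1 - x ^ (n-k)) * u x n k := by
  obtain ⟨d, rfl⟩ := Nat.exists_eq_add_of_le hk
  rcases d with _ | d
  · simp [u]
  · have e1 : k + (d + 1) - (k+1) = d := by omega
    have e2 : k + (d+1) - k = d + 1 := by omega
    have hk' : k + 1 ≤ k + (d+1) := by omega
    simp only [u, if_pos hk, if_pos hk', e1, e2, P_succ]
    have := P_ne h0 h1 k
    have := P_ne h0 h1 d
    have := one_sub_ne h0 h1 d
    have := one_sub_ne h0 h1 k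
    field_simp
    ring

noncomputable def U (x : ℝ) (a n : ℕ) : ℝ := ∑ k ∈ Finset.range (n+1), x ^ (a*k) * u x n k

lemma u_top (x : ℝ) (n : ℕ) : u x n (n+1) = 0 := by simp [u]

lemma U_ext (x : ℝ) (a n : ℕ) : U x a n = ∑ k ∈ Finset.range (n+2), x ^ (a*k) * u x n k := by
  rw [Finset.sum_range_succ, u_top, U]; simp

lemma U0_step {x : ℝ} (h0 : 0 < x) (h1 : x < 1) (n : ℕ) :
    (1 - x^(n+1))^2 * U x 0 (n+1) = U x 0 n := by
  rw [U_ext x 0 n, U, Finset.mul_sum, ← sub_eq_zero, ← Finset.sum_sub_distrib]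
  set G : ℕ → ℝ := fun k => x ^ (n+1-k) * (1 - x^k)^2 * u x (n+1) k with hG
  have key : ∀ k ∈ Finset.range (n+2),
      (1 - x^(n+1))^2 * (x ^ (0*k) * u x (n+1) k) - x ^ (0*k) * u x n k = G k - G (k+1) := by
    intro k hk
    have hk : k ≤ n + 1 := by have := Finset.mem_range.1 hk; omega
    rw [u_step_n h0 h1 n k hk]
    have h2 := u_step_k h0 h1 (n+1) k hk
    have h3 : G (k+1) = x^(n+1-k) * x^(2*k) * (1 - x^(n+1-k)) * u x (n+1) k := by
      rcases Nat.lt_or_ge k (n+1) with h | h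
      · have e : G (k+1) = x^(n+1-(k+1)) * (u x (n+1) (k+1) * (1 - x ^ (k+1)) ^ 2) := by
          simp only [hG]; ring
        rw [e, h2]
        have e2 : n+1-k = (n+1-(k+1)) + 1 := by omega
        rw [e2]; ring
      · have : k = n+1 := by omega
        subst this
        simp [hG, u_top]
    rw [h3]
    have e3 : x^(n+1) = x^(n+1-k) * x^k := by rw [← pow_add]; congr 1; omega
    simp only [hG]
    rw [e3]
    generalize x^(n+1-k) = y
    ring
  rw [Finset.sum_congr rfl key, Finset.sum_range_sub']
  simp [hG, u_top]

lemma U0_eq {x : ℝ} (h0 : 0 < x) (h1 : x < 1) (n : ℕ) : U x 0 n = 1 / qPoch x x n ^ 2 := by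
  induction n with
  | zero => simp [U, u, P_zero]
  | succ n ih =>
    have := U0_step h0 h1 n
    rw [ih] at this
    have h2 := one_sub_ne h0 h1 n
    have h3 := P_ne h0 h1 n
    rw [P_succ]
    field_simp at this ⊢
    linarith

lemma U1_step {x : ℝ} (h0 : 0 < x) (h1 : x < 1) (n : ℕ) :
    U x 1 (n+1) = U x 1 n + x^(n+1) * U x 0 (n+1) := by
  rw [U_ext x 1 n, U, U, Finset.mul_sum, ← Finset.sum_add_distrib]
  apply Finset.sum_congr rfl
  intro k hk
  have hk : k ≤ n + 1 := by have := Finset.mem_range.1 hk; omega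
  rw [u_step_n h0 h1 n k hk]
  have e3 : x^(n+1) = x^(n+1-k) * x^k := by rw [← pow_add]; congr 1; omega
  rw [e3]
  generalize x^(n+1-k) = y
  ring

lemma U2_eq {x : ℝ} (h0 : 0 < x) (h1 : x < 1) (n : ℕ) :
    (1 - x) * U x 2 n = (2 - x^(n+1)) * U x 1 n - U x 0 n := by
  rw [← sub_eq_zero]
  simp only [U, Finset.mul_sum]
  rw [← Finset.sum_sub_distrib, ← Finset.sum_sub_distrib]
  set G : ℕ → ℝ := fun k => (1 - x^k)^2 * u x n k with hG
  have key : ∀ k ∈ Finset.range (n+1),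
      (1 - x) * (x ^ (2*k) * u x n k) - ((2 - x^(n+1)) * (x ^ (1*k) * u x n k)
        - x ^ (0*k) * u x n k) = G k - G (k+1) := by
    intro k hk
    have hk : k ≤ n := by have := Finset.mem_range.1 hk; omega
    have h2 := u_step_k h0 h1 n k hk
    have h3 : G (k+1) = x ^ (2*k+1) * (1 - x ^ (n-k)) * u x n k := by
      rw [← h2]; simp only [hG]; ring
    rw [h3]
    have e3 : x^(n+1) = x^(n-k) * x^k * x := by
      rw [← pow_add, ← pow_succ]; congr 1; omega
    simp only [hG]
    rw [e3]
    generalize x^(n-k) = y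
    ring
  rw [Finset.sum_congr rfl key, Finset.sum_range_sub']
  simp [hG, u_top]

/-- The alternating sum. -/
noncomputable def A (p : ℝ) (n : ℕ) : ℝ :=
  ∑ i ∈ Finset.range (n+1), (-1)^i * p^(i*(i+1)) / qPoch (p^2) (p^2) (n-i)

lemma A_step {p : ℝ} (h0 : 0 < p^2) (h1 : p^2 < 1) (n : ℕ) :
    A p (n+1) = (1 - (p^2)^(n+1)) * A p n + (p^2)^(n+1) / qPoch (p^2) (p^2) (n+1) := by
  have hA : A p (n+1) - A p n = ∑ i ∈ Finset.range (n+2),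
      (p^2)^(n+1-i) * ((-1)^i * p^(i*(i+1)) / qPoch (p^2) (p^2) (n+1-i)) := by
    rw [Finset.sum_range_succ, A, A, Finset.sum_range_succ, add_sub_right_comm,
      ← Finset.sum_sub_distrib]
    congr 1
    · apply Finset.sum_congr rfl
      intro i hi
      have hi : i ≤ n := by have := Finset.mem_range.1 hi; omega
      have e : n + 1 - i = (n - i) + 1 := by omega
      rw [e, P_succ]
      have := P_ne h0 h1 (n-i)
      have := one_sub_ne h0 h1 (n-i)
      generalize n - i = d at *
      field_simp
      ring
    · simp
  rw [Finset.sum_range_succ'] at hA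
  have hB : ∑ k ∈ Finset.range (n+1), (p^2)^(n+1-(k+1)) *
      ((-1)^(k+1) * p^((k+1)*(k+1+1)) / qPoch (p^2) (p^2) (n+1-(k+1)))
      = - (p^2)^(n+1) * A p n := by
    rw [A, Finset.mul_sum]
    apply Finset.sum_congr rfl
    intro i hi
    have hi : i ≤ n := by have := Finset.mem_range.1 hi; omega
    have e : n + 1 - (i+1) = n - i := by omega
    have e3 : (p^2)^(n+1) = (p^2)^(n-i) * (p^2)^(i+1) := by rw [← pow_add]; congr 1; omega
    rw [e, e3]
    generalize n - i = d
    ring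
  rw [hB] at hA
  simp at hA
  rw [div_eq_mul_inv]
  linarith

lemma A_eq {p : ℝ} (h0 : 0 < p^2) (h1 : p^2 < 1) (n : ℕ) :
    A p n = qPoch (p^2) (p^2) n * U (p^2) 1 n := by
  induction n with
  | zero => simp [A, U, u, P_zero]
  | succ n ih =>
    rw [A_step h0 h1, ih, U1_step h0 h1, U0_eq h0 h1, P_succ]
    have := P_ne h0 h1 n
    have := one_sub_ne h0 h1 n
    field_simp

lemma T_eq {p : ℝ} (h0 : 0 < p^2) (h1 : p^2 < 1) (n : ℕ) :
    ∑ i ∈ Finset.range (n+1), (-1)^i * p^(i*(i+1)) * (1 - (p^2)^(i+1)) / qPoch (p^2) (p^2) (n-i)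
      = (1 - p^2) * (qPoch (p^2) (p^2) n * U (p^2) 2 n) := by
  have hT : ∑ i ∈ Finset.range (n+1),
      (-1)^i * p^(i*(i+1)) * (1 - (p^2)^(i+1)) / qPoch (p^2) (p^2) (n-i)
      = A p n + (A p (n+1) - 1 / qPoch (p^2) (p^2) (n+1)) := by
    rw [A, A, Finset.sum_range_succ' _ (n+1)]
    simp only [Nat.sub_zero, pow_zero, zero_mul, mul_one, add_sub_cancel_right]
    rw [← Finset.sum_add_distrib]
    apply Finset.sum_congr rfl
    intro i _
    have e : n + 1 - (i+1) = n - i := by omega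
    rw [e]
    ring
  have h2 := U2_eq h0 h1 n
  rw [hT, A_step h0 h1, A_eq h0 h1, P_succ, mul_left_comm (1 - p^2), h2, U0_eq h0 h1]
  have := P_ne h0 h1 n
  have := one_sub_ne h0 h1 n
  field_simp
  ring

lemma sum_Icc (f : ℕ → ℝ) (n : ℕ) :
    ∑ k ∈ Finset.Icc 1 (n+1), f k = ∑ k ∈ Finset.range (n+1), f (k+1) := by
  rw [Finset.range_eq_Ico, Finset.sum_Ico_add' f 0 (n+1) 1]
  rfl

end A2

open A2

theorem anzanello_a2_alt_sum (q : ℝ) (hq : 1 < q) (m : ℕ) (hm : 1 ≤ m) :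
    ∑ k ∈ Finset.Icc 1 m,
      (1 - q) * q ^ (-(2 * (k : ℤ) ^ 2) - k) / qPoch (q ^ (-2 : ℤ)) (q ^ (-2 : ℤ)) (k - 1)
        * (qPoch (q ^ (-(2 * (k : ℤ)))) (q ^ (-2 : ℤ)) (m - k)
            / qPoch (q ^ (-2 : ℤ)) (q ^ (-2 : ℤ)) (m - k))
        * q ^ (-(m : ℤ) + k)
    = 1 / (q ^ m * (1 + q)) * ∑ i ∈ Finset.Icc 1 m,
        (-1 : ℝ) ^ (i - 1) * q ^ (-(i : ℤ) * (i + 1)) * (1 - q ^ (2 * i))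
          / qPoch (q ^ (-2 : ℤ)) (q ^ (-2 : ℤ)) (m - i) := by
  obtain ⟨n, rfl⟩ : ∃ n, m = n + 1 := ⟨m - 1, by omega⟩
  have hq0 : q ≠ 0 := by linarith
  obtain ⟨p, rfl⟩ : ∃ p, q = p⁻¹ := ⟨q⁻¹, by simp⟩
  have hp : p ≠ 0 := by simpa using hq0
  have hp0 : 0 < p := by
    have : 0 < p⁻¹ := by linarith
    simpa using this
  have hp1 : p < 1 := by
    by_contra h
    have := inv_le_one_of_one_le₀ (not_lt.1 h)
    linarith
  have h0 : 0 < p^2 := by positivity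
  have h1 : p^2 < 1 := pow_lt_one₀ hp0.le hp1 (by omega)
  have hx : p⁻¹ ^ (-2 : ℤ) = p^2 := by simp [zpow_neg]; try norm_cast
  rw [hx, sum_Icc, sum_Icc]
  have hL : ∀ k ∈ Finset.range (n+1),
      (1 - p⁻¹) * p⁻¹ ^ (-(2 * ((k+1 : ℕ) : ℤ) ^ 2) - ((k+1 : ℕ) : ℤ)) / qPoch (p^2) (p^2) (k + 1 - 1)
        * (qPoch (p⁻¹ ^ (-(2 * ((k+1 : ℕ) : ℤ)))) (p^2) (n + 1 - (k+1))
            / qPoch (p^2) (p^2) (n + 1 - (k+1)))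
        * p⁻¹ ^ (-((n+1 : ℕ) : ℤ) + ((k+1 : ℕ) : ℤ))
      = (1 - p⁻¹) * p^(n+3) * qPoch (p^2) (p^2) n * ((p^2)^(2*k) * u (p^2) n k) := by
    intro k hk
    have hk : k ≤ n := by have := Finset.mem_range.1 hk; omega
    obtain ⟨d, rfl⟩ := Nat.exists_eq_add_of_le hk
    have e1 : k + d + 1 - (k+1) = d := by omega
    have e2 : k + d - k = d := by omega
    have e3 : p⁻¹ ^ (-(2 * ((k+1 : ℕ) : ℤ))) = (p^2)^(k+1) := by
      rw [inv_zpow, ← zpow_neg, neg_neg, ← pow_mul, ← zpow_natCast]; push_cast; rfl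
    have e4 : p⁻¹ ^ (-(2 * ((k+1 : ℕ) : ℤ) ^ 2) - ((k+1 : ℕ) : ℤ)) = p^(2*(k+1)^2 + (k+1)) := by
      rw [inv_zpow, ← zpow_neg, ← zpow_natCast]; congr 1; push_cast; ring
    have e5 : p⁻¹ ^ (-((k+d+1 : ℕ) : ℤ) + ((k+1 : ℕ) : ℤ)) = p^d := by
      rw [inv_zpow, ← zpow_neg, ← zpow_natCast]; congr 1; push_cast; ring
    rw [e1, e3, e4, e5, Nat.add_sub_cancel, u, if_pos hk, e2, ← P_split]
    have := P_ne h0 h1 k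
    have := P_ne h0 h1 d
    generalize 1 - p⁻¹ = c
    field_simp
    ring
  have hR : ∀ i ∈ Finset.range (n+1),
      (-1 : ℝ) ^ (i + 1 - 1) * p⁻¹ ^ (-((i+1 : ℕ) : ℤ) * (((i+1 : ℕ) : ℤ) + 1))
        * (1 - p⁻¹ ^ (2 * (i+1))) / qPoch (p^2) (p^2) (n + 1 - (i+1))
      = - ((-1)^i * p^(i*(i+1)) * (1 - (p^2)^(i+1)) / qPoch (p^2) (p^2) (n-i)) := by
    intro i _
    have e1 : n + 1 - (i+1) = n - i := by omega
    have e4 : p⁻¹ ^ (-((i+1 : ℕ) : ℤ) * (((i+1 : ℕ) : ℤ) + 1)) = p^(i*(i+1)) * p^(2*(i+1)) := by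
      rw [inv_zpow, ← zpow_neg, ← pow_add, ← zpow_natCast]; congr 1; push_cast; ring
    have e5 : p^(2*(i+1)) * (1 - p⁻¹ ^ (2*(i+1))) = - (1 - (p^2)^(i+1)) := by
      rw [← pow_mul, mul_sub, inv_pow, mul_inv_cancel₀ (pow_ne_zero _ hp)]; ring
    rw [e1, e4, Nat.add_sub_cancel, mul_assoc, mul_assoc, e5]
    ring
  rw [Finset.sum_congr rfl hL, Finset.sum_congr rfl hR, Finset.sum_neg_distrib, T_eq h0 h1,
    ← Finset.mul_sum, ← U]
  rw [inv_pow]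
  have : 1 + p ≠ 0 := by positivity
  have : 1 + p⁻¹ ≠ 0 := by positivity
  have : p + 1 ≠ 0 := by positivity
  field_simp
  ring
end
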